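/- arXiv:1710.06056 — 5 statements merged into one kernel-verified Lean document; each statement's English description precedes it below -/
import Mathlib

section
/- Let U ⊂ ℝ^d be a compact set satisfying the (δ_b, d)-corner condition, and let f : U → ℝ be Lipschitz with constant κ > 0 (i.e. |f(θ) − f(θ′)| ≤ κ‖θ − θ′‖ for all θ, θ′ ∈ U). Let b ∈ ℝ and suppose there exists θ* ∈ U with f(θ*) ≥ b. Then for every γ > 0, the Lebesgue measure of the excursion set {θ ∈ U : f(θ) ≥ b − γ} is at least min{δ_b (γ/κ)^d, 1}. -/
open MeasureTheory

theorem ball_inter_subset_superlevel {X : Type*} [PseudoMetricSpace X] {U : Set X} {f : X → ℝ}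
    {κ : ℝ} {x₀ : X} (hκ : 0 ≤ κ) (hf : ∀ x ∈ U, f x₀ - f x ≤ κ * dist x₀ x) (r : ℝ) :
    Metric.ball x₀ r ∩ U ⊆ {x ∈ U | f x₀ - κ * r ≤ f x} := by
  rintro x ⟨hxr, hxU⟩
  have hdrop : f x₀ - f x ≤ κ * r :=
    (hf x hxU).trans (mul_le_mul_of_nonneg_left (Metric.mem_ball'.mp hxr).le hκ)
  exact ⟨hxU, sub_le_comm.mp hdrop⟩

theorem excursion_set_measure_lower_bound_general {X : Type*} [PseudoMetricSpace X]
    [MeasurableSpace X] (μ : Measure X) {U : Set X} {f : X → ℝ} {κ b : ℝ} {x₀ : X}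
    (hκ : 0 < κ) (hf : ∀ x ∈ U, f x₀ - f x ≤ κ * dist x₀ x) (hb : b ≤ f x₀) (γ : ℝ) :
    μ (Metric.ball x₀ (γ / κ) ∩ U) ≤ μ {x ∈ U | b - γ ≤ f x} := by
  have hsub := ball_inter_subset_superlevel hκ.le hf (γ / κ)
  rw [mul_div_cancel₀ γ hκ.ne'] at hsub
  exact measure_mono fun x hx ↦
    ⟨(hsub hx).1, (sub_le_sub_right hb γ).trans (hsub hx).2⟩

/-- Excursion-set volume lower bound: if `U` is compact and satisfies the
`(δb, d)`-corner condition, `f` is `κ`-Lipschitz on `U`, and `f(θ*) ≥ b` for some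
`θ* ∈ U`, then the Lebesgue measure of `{θ ∈ U : f(θ) ≥ b − γ}` is at least
`min{δb (γ/κ)^d, 1}`. -/
theorem excursion_set_measure_lower_bound
    (d : ℕ) (U : Set (EuclideanSpace ℝ (Fin d)))
    (hUcomp : IsCompact U)
    (δb : ℝ) (hδb : 0 < δb)
    (hcorner : ∀ θ ∈ U, ∀ s : ℝ, 0 < s →
      ENNReal.ofReal (min (δb * s ^ d) 1) ≤ volume (Metric.ball θ s ∩ U))
    (f : EuclideanSpace ℝ (Fin d) → ℝ) (κ : ℝ) (hκ : 0 < κ)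
    (hLip : ∀ θ ∈ U, ∀ θ' ∈ U, |f θ - f θ'| ≤ κ * ‖θ - θ'‖)
    (b : ℝ) (θs : EuclideanSpace ℝ (Fin d)) (hθs : θs ∈ U) (hfθs : b ≤ f θs)
    (γ : ℝ) (hγ : 0 < γ) :
    ENNReal.ofReal (min (δb * (γ / κ) ^ d) 1)
      ≤ volume {θ ∈ U | b - γ ≤ f θ} := by
  exact (hcorner θs hθs (γ / κ) (div_pos hγ hκ)).trans <|
    excursion_set_measure_lower_bound_general volume hκ
      (fun θ hθ ↦ dist_eq_norm θs θ ▸ le_of_abs_le (hLip θs hθs θ hθ)) hfθs γ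
end

section
/- Let U ⊂ ℝ^d be a compact set satisfying the (δ_b, d)-corner condition. Let {ζ(θ) : θ ∈ U} be a real-valued random field on a probability space (Ω, 𝓕, P) with almost surely continuous sample paths, such that almost surely |ζ(θ) − ζ(θ′)| ≤ κ‖θ − θ′‖ for all θ, θ′ ∈ U (for a constant κ > 0), and such that for every θ ∈ U and every A > 0, P(ζ(θ) ≥ A) ≤ e^{−A}. Then for every γ > 0 with δ_b (γ/κ)^d ≤ 1 and every b > γ, P( sup_{θ∈U} ζ(θ) ≥ b ) ≤ e^{−(b−γ)} · m(U) · κ^d / (γ^d δ_b), where m(U) denotes the Lebesgue measure of U. -/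
open MeasureTheory

/-!
On the event `{∃ θ ∈ U, b ≤ ζ θ}` the Lipschitz bound gives `b - κ * r ≤ ζ` on a whole ball
`ball θ r ∩ U`, whose measure is bounded below. By Markov and Tonelli, the probability that
`{θ ∈ U | b - κ * r ≤ ζ θ}` has measure at least `c` is at most
`c⁻¹ * ∫ θ in U, P {b - κ * r ≤ ζ θ}`.

Since `(ω, θ) ↦ ζ ω θ` is not assumed measurable, Tonelli is applied after replacing `θ` by its
image under simple functions `T n` converging pointwise to the identity. As `n → ∞`, the sets
`T n ⁻¹' S` are only sure to exhaust the interior of `S`, which suffices because balls are open.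
-/

open Filter Topology

section SimpleFunc

variable {X Y Ω : Type*} [MeasurableSpace X] [MeasurableSpace Ω]

theorem measure_preimage_simpleFunc_eq_sum (m : Measure X) (T : SimpleFunc X Y) (S : Set Y) :
    m (T ⁻¹' S) = ∑ y ∈ T.range, S.indicator 1 y * m (T ⁻¹' {y}) := by
  rw [← SimpleFunc.map_lintegral, ← SimpleFunc.lintegral_eq_lintegral,
    ← lintegral_indicator_one (T.measurableSet_preimage S)]
  rfl

theorem measurable_measure_preimage_simpleFunc (m : Measure X) (T : SimpleFunc X Y)
    {H : Y → Set Ω} (hH : ∀ y, MeasurableSet (H y)) :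
    Measurable fun ω => m (T ⁻¹' {y | ω ∈ H y}) := by
  have hsum : (fun ω => m (T ⁻¹' {y | ω ∈ H y})) =
      fun ω => ∑ y ∈ T.range, (H y).indicator 1 ω * m (T ⁻¹' {y}) :=
    funext fun ω => measure_preimage_simpleFunc_eq_sum m T {y | ω ∈ H y}
  rw [hsum]
  exact Finset.measurable_fun_sum _ fun y _ =>
    (measurable_one.indicator (hH y)).mul_const (m (T ⁻¹' {y}))

theorem lintegral_measure_preimage_simpleFunc (m : Measure X) (P : Measure Ω) (T : SimpleFunc X Y)
    {H : Y → Set Ω} (hH : ∀ y, MeasurableSet (H y)) :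
    ∫⁻ ω, m (T ⁻¹' {y | ω ∈ H y}) ∂P = ∫⁻ x, P (H (T x)) ∂m := by
  have hmeas (y : Y) : Measurable ((H y).indicator (1 : Ω → ENNReal)) :=
    measurable_one.indicator (hH y)
  calc ∫⁻ ω, m (T ⁻¹' {y | ω ∈ H y}) ∂P
      = ∫⁻ ω, ∑ y ∈ T.range, (H y).indicator 1 ω * m (T ⁻¹' {y}) ∂P :=
        lintegral_congr fun ω => measure_preimage_simpleFunc_eq_sum m T {y | ω ∈ H y}
    _ = ∑ y ∈ T.range, P (H y) * m (T ⁻¹' {y}) := by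
        rw [lintegral_finsetSum _ fun y _ => (hmeas y).mul_const _]
        simp only [lintegral_mul_const _ (hmeas _), lintegral_indicator_one (hH _)]
    _ = ∫⁻ x, P (H (T x)) ∂m := by
        rw [← SimpleFunc.map_lintegral, ← SimpleFunc.lintegral_eq_lintegral]
        rfl

end SimpleFunc

section Interior

variable {X Ω : Type*} [MeasurableSpace X] [MeasurableSpace Ω]

theorem measure_interior_le_liminf_measure_preimage [TopologicalSpace X] (m : Measure X)
    {T : ℕ → X → X} (hT : ∀ x, Tendsto (T · x) atTop (𝓝 x)) (S : Set X) :
    m (interior S) ≤ liminf (fun n => m (T n ⁻¹' S)) atTop := by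
  have hmono : Monotone fun N => ⋂ n ≥ N, T n ⁻¹' S :=
    fun _ _ h => Set.biInter_subset_biInter_left fun _ => h.trans
  have hsub : interior S ⊆ ⋃ N, ⋂ n ≥ N, T n ⁻¹' S := fun x hx => by
    simpa using (hT x).eventually_mem (mem_interior_iff_mem_nhds.1 hx)
  calc m (interior S) ≤ m (⋃ N, ⋂ n ≥ N, T n ⁻¹' S) := measure_mono hsub
    _ = ⨆ N, m (⋂ n ≥ N, T n ⁻¹' S) := hmono.measure_iUnion
    _ ≤ ⨆ N, ⨅ n ≥ N, m (T n ⁻¹' S) :=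
        iSup_mono fun N => le_iInf₂ fun n hn => measure_mono (Set.biInter_subset_of_mem hn)
    _ = liminf (fun n => m (T n ⁻¹' S)) atTop := liminf_eq_iSup_iInf_of_nat.symm

theorem mul_measure_le_measure_interior_le [PseudoEMetricSpace X]
    [TopologicalSpace.SeparableSpace X] [OpensMeasurableSpace X] (m : Measure X) (P : Measure Ω)
    {A : X → Set Ω} {p : ENNReal} (hA : ∀ x, P (A x) ≤ p) (c : ENNReal) :
    c * P {ω | c ≤ m (interior {x | ω ∈ A x})} ≤ p * m Set.univ := by
  cases isEmpty_or_nonempty X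
  · rcases eq_or_ne c 0 with rfl | hc
    · simp
    · simp [m.eq_zero_of_isEmpty, hc]
  let T : ℕ → SimpleFunc X X := SimpleFunc.nearestPt (TopologicalSpace.denseSeq X)
  have hT (x : X) : Tendsto (T · x) atTop (𝓝 x) :=
    SimpleFunc.tendsto_nearestPt (TopologicalSpace.denseRange_denseSeq X x)
  let H (x : X) : Set Ω := toMeasurable P (A x)
  have hH (x : X) : MeasurableSet (H x) := measurableSet_toMeasurable P (A x)
  let F (n : ℕ) (ω : Ω) : ENNReal := m (T n ⁻¹' {x | ω ∈ H x})
  have hF (n : ℕ) : Measurable (F n) := measurable_measure_preimage_simpleFunc m (T n) hH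
  have hF_lintegral (n : ℕ) : ∫⁻ ω, F n ω ∂P ≤ p * m Set.univ :=
    calc ∫⁻ ω, F n ω ∂P = ∫⁻ x, P (H (T n x)) ∂m :=
          lintegral_measure_preimage_simpleFunc m P (T n) hH
      _ ≤ ∫⁻ _, p ∂m := lintegral_mono fun x => (measure_toMeasurable _).trans_le (hA (T n x))
      _ = p * m Set.univ := lintegral_const p
  have hF_liminf (ω : Ω) : m (interior {x | ω ∈ A x}) ≤ liminf (F · ω) atTop :=
    calc m (interior {x | ω ∈ A x}) ≤ m (interior {x | ω ∈ H x}) :=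
          measure_mono (interior_mono fun x hx => subset_toMeasurable P (A x) hx)
      _ ≤ liminf (F · ω) atTop := measure_interior_le_liminf_measure_preimage m hT _
  calc c * P {ω | c ≤ m (interior {x | ω ∈ A x})}
      ≤ c * P {ω | c ≤ liminf (F · ω) atTop} := by
        gcongr with ω
        exact hF_liminf ω
    _ ≤ ∫⁻ ω, liminf (F · ω) atTop ∂P := mul_meas_ge_le_lintegral (.liminf hF) c
    _ ≤ liminf (fun n => ∫⁻ ω, F n ω ∂P) atTop := lintegral_liminf_le hF
    _ ≤ p * m Set.univ :=
        liminf_le_of_frequently_le' (.of_forall hF_lintegral)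

end Interior

section RandomField

variable {E Ω : Type*} [PseudoMetricSpace E] [MeasurableSpace E] [MeasurableSpace Ω]

theorem mul_measure_exists_ge_le [SecondCountableTopology E] [OpensMeasurableSpace E]
    (m : Measure E) {U : Set E} (hU : MeasurableSet U) (P : Measure Ω) {ζ : Ω → E → ℝ} {κ : ℝ}
    (hκ : 0 ≤ κ) (hLip : ∀ᵐ ω ∂P, ∀ θ ∈ U, ∀ θ' ∈ U, |ζ ω θ - ζ ω θ'| ≤ κ * dist θ θ')
    {b r : ℝ} {c p : ENNReal} (hc : ∀ θ ∈ U, c ≤ m (Metric.ball θ r ∩ U))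
    (hp : ∀ θ ∈ U, P {ω | b - κ * r ≤ ζ ω θ} ≤ p) :
    c * P {ω | ∃ θ ∈ U, b ≤ ζ ω θ} ≤ p * m U := by
  let mU : Measure U := m.comap (↑)
  have hmU (t : Set U) : mU t = m ((↑) '' t) := comap_subtype_coe_apply hU m t
  let A (θ : U) : Set Ω := {ω | b - κ * r ≤ ζ ω θ}
  have hball : ∀ᵐ ω ∂P, (∃ θ ∈ U, b ≤ ζ ω θ) → c ≤ mU (interior {θ | ω ∈ A θ}) := by
    filter_upwards [hLip] with ω hω
    rintro ⟨θ, hθ, hbθ⟩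
    have hsub : Metric.ball (⟨θ, hθ⟩ : U) r ⊆ {θ' | ω ∈ A θ'} := fun θ' hθ' => by
      have hdist : κ * dist θ θ' ≤ κ * r :=
        mul_le_mul_of_nonneg_left (Metric.mem_ball'.1 hθ').le hκ
      have hζ : ζ ω θ - ζ ω θ' ≤ κ * dist θ θ' := (abs_le.1 (hω θ hθ θ' θ'.2)).2
      change b - κ * r ≤ ζ ω θ'
      linarith
    calc c ≤ m (Metric.ball θ r ∩ U) := hc θ hθ
      _ = mU (Metric.ball ⟨θ, hθ⟩ r) := by
        rw [hmU, Set.inter_comm, ← Subtype.image_preimage_coe]; rfl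
      _ ≤ mU (interior {θ' | ω ∈ A θ'}) :=
        measure_mono (interior_maximal hsub Metric.isOpen_ball)
  calc c * P {ω | ∃ θ ∈ U, b ≤ ζ ω θ}
      ≤ c * P {ω | c ≤ mU (interior {θ | ω ∈ A θ})} := by
        gcongr 1
        exact measure_mono_ae hball
    _ ≤ p * mU Set.univ := mul_measure_le_measure_interior_le mU P (fun θ => hp θ θ.2) c
    _ = p * m U := by simp [hmU]

/-- The `(δ, d)`-corner condition: balls centred in `U` meet `U` in measure at least `δ * s ^ d`
for small radii `s`, which turns a single exceedance of a Lipschitz field into one on a set of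
positive measure. A general metric measure space carries no dimension, hence the real exponent. -/
def CornerCondition (m : Measure E) (U : Set E) (δ d : ℝ) : Prop :=
  ∀ θ ∈ U, ∀ s : ℝ, 0 < s → ENNReal.ofReal (min (δ * s ^ d) 1) ≤ m (Metric.ball θ s ∩ U)

theorem CornerCondition.ofReal_mul_rpow_le_measure {m : Measure E} {U : Set E} {δ d : ℝ}
    (h : CornerCondition m U δ d) {s : ℝ} (hs : 0 < s) (hsmall : δ * s ^ d ≤ 1) {θ : E}
    (hθ : θ ∈ U) : ENNReal.ofReal (δ * s ^ d) ≤ m (Metric.ball θ s ∩ U) := by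
  simpa only [min_eq_left hsmall] using h θ hθ s hs

theorem sup_field_exponential_tail_general [SecondCountableTopology E] [OpensMeasurableSpace E]
    (m : Measure E) {U : Set E} (hU : MeasurableSet U) (hUfin : m U ≠ ⊤) {δ d : ℝ} (hδ : 0 < δ)
    (hcorner : CornerCondition m U δ d) (P : Measure Ω) {ζ : Ω → E → ℝ} {κ : ℝ} (hκ : 0 < κ)
    (hLip : ∀ᵐ ω ∂P, ∀ θ ∈ U, ∀ θ' ∈ U, |ζ ω θ - ζ ω θ'| ≤ κ * dist θ θ')
    (htail : ∀ θ ∈ U, ∀ A : ℝ, 0 < A → P {ω | A ≤ ζ ω θ} ≤ ENNReal.ofReal (Real.exp (-A)))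
    {γ b : ℝ} (hγ : 0 < γ) (hsmall : δ * (γ / κ) ^ d ≤ 1) (hb : γ < b) :
    P {ω | ∃ θ ∈ U, b ≤ ζ ω θ}
      ≤ ENNReal.ofReal (Real.exp (-(b - γ)) * (m U).toReal * κ ^ d / (γ ^ d * δ)) := by
  have hr : 0 < γ / κ := div_pos hγ hκ
  have hc : 0 < δ * (γ / κ) ^ d := by positivity
  have hlevel : b - κ * (γ / κ) = b - γ := by rw [mul_div_cancel₀ γ hκ.ne']
  have hmul : ENNReal.ofReal (δ * (γ / κ) ^ d) * P {ω | ∃ θ ∈ U, b ≤ ζ ω θ}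
      ≤ ENNReal.ofReal (Real.exp (-(b - γ))) * m U :=
    mul_measure_exists_ge_le m hU P hκ.le hLip
      (fun _ hθ => hcorner.ofReal_mul_rpow_le_measure hr hsmall hθ)
      (fun θ hθ => hlevel ▸ htail θ hθ (b - γ) (sub_pos.2 hb))
  calc P {ω | ∃ θ ∈ U, b ≤ ζ ω θ}
      ≤ ENNReal.ofReal (Real.exp (-(b - γ))) * m U / ENNReal.ofReal (δ * (γ / κ) ^ d) := by
        rw [ENNReal.le_div_iff_mul_le (.inl (by simpa using hc)) (.inl ENNReal.ofReal_ne_top),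
          mul_comm]
        exact hmul
    _ = ENNReal.ofReal (Real.exp (-(b - γ)) * (m U).toReal / (δ * (γ / κ) ^ d)) := by
        rw [ENNReal.ofReal_div_of_pos hc, ENNReal.ofReal_mul (Real.exp_nonneg _),
          ENNReal.ofReal_toReal hUfin]
    _ = ENNReal.ofReal (Real.exp (-(b - γ)) * (m U).toReal * κ ^ d / (γ ^ d * δ)) := by
        rw [Real.div_rpow hγ.le hκ.le]
        field_simp

end RandomField

/-- The stopped log-likelihood-ratio maximal tail estimate (eq. tail-LRT in the proof
of Theorem 2): if the random field `ζ` has a.s. continuous `κ`-Lipschitz sample paths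
on the compact set `U` satisfying the `(δb, d)`-corner condition and marginal tails
`P(ζ(θ) ≥ A) ≤ e^{−A}`, then
`P(sup_{θ∈U} ζ(θ) ≥ b) ≤ e^{−(b−γ)} m(U) κ^d / (γ^d δb)`. -/
theorem sup_field_exponential_tail
    (d : ℕ) (U : Set (EuclideanSpace ℝ (Fin d)))
    (hUcomp : IsCompact U)
    (δb : ℝ) (hδb : 0 < δb)
    (hcorner : ∀ θ ∈ U, ∀ s : ℝ, 0 < s →
      ENNReal.ofReal (min (δb * s ^ d) 1) ≤ volume (Metric.ball θ s ∩ U))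
    {Ω : Type*} [MeasurableSpace Ω] (P : Measure Ω) [IsProbabilityMeasure P]
    (ζ : Ω → EuclideanSpace ℝ (Fin d) → ℝ)
    (hcont : ∀ᵐ ω ∂P, ContinuousOn (ζ ω) U)
    (κ : ℝ) (hκ : 0 < κ)
    (hLip : ∀ᵐ ω ∂P, ∀ θ ∈ U, ∀ θ' ∈ U, |ζ ω θ - ζ ω θ'| ≤ κ * ‖θ - θ'‖)
    (htail : ∀ θ ∈ U, ∀ A : ℝ, 0 < A →
      P {ω | A ≤ ζ ω θ} ≤ ENNReal.ofReal (Real.exp (-A)))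
    (γ b : ℝ) (hγ : 0 < γ) (hsmall : δb * (γ / κ) ^ d ≤ 1) (hb : γ < b) :
    P {ω | ∃ θ ∈ U, b ≤ ζ ω θ}
      ≤ ENNReal.ofReal
          (Real.exp (-(b - γ)) * (volume U).toReal * κ ^ d / (γ ^ d * δb)) := by
  simpa only [Real.rpow_natCast] using
    sup_field_exponential_tail_general (d := d) volume hUcomp.measurableSet
      hUcomp.measure_ne_top hδb (by simpa only [CornerCondition, Real.rpow_natCast] using hcorner)
      P hκ (by simpa only [dist_eq_norm] using hLip) htail hγ (by simpa using hsmall) hb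
end

section
/- Let U ⊂ ℝ^d be a compact set satisfying the (δ_b, d)-corner condition. Let (𝓕_n)_{n=0}^N be a filtration on a probability space (Ω, 𝓕, P), and let {M_n(θ) : 0 ≤ n ≤ N, θ ∈ U} be a family of random variables such that: for each θ ∈ U, (M_n(θ))_{n=0}^N is a martingale with respect to (𝓕_n) with M_0(θ) = 0 and |M_n(θ) − M_{n−1}(θ)| ≤ a almost surely for all 1 ≤ n ≤ N (for a constant a > 0); and almost surely, θ ↦ M_n(θ) is continuous and |M_n(θ) − M_n(θ′)| ≤ Nκ‖θ − θ′‖ for all 1 ≤ n ≤ N and all θ, θ′ ∈ U (for a constant κ > 0). Then for every γ > 0 with δ_b (γ/(Nκ))^d ≤ 1 and every t > γ, P( max_{1≤n≤N} sup_{θ∈U} M_n(θ) ≥ t ) ≤ m(U) · exp( −(t − γ)^2 / (2 N a^2) ) · (Nκ)^d / (γ^d δ_b), where m(U) is the Lebesgue measure of U. -/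
open MeasureTheory

/-!
For a supermartingale `X` with `X 0 ≤ 0` and increments bounded by `a`, the process
`exp (l * X n - n * (l * a) ^ 2 / 2)` is a nonnegative supermartingale for every `l ≥ 0`, so
optional stopping bounds the probability that `X` reaches `s` by time `N`; the choice
`l = s / (N * a ^ 2)` optimizes the bound.

If a random field with `L`-Lipschitz paths reaches `t` at some point `θ`, then it is at least
`t - γ` on the ball of radius `γ / L` around `θ`, whose part inside `U` has volume at least `v`.
By Fubini the expected volume of the set of points where the field ever reaches `t - γ` is at
most `volume U` times the tail bound at a single point, and Markov's inequality for this random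
volume at level `v` concludes.
-/

section SupermartingaleTail

open ProbabilityTheory

variable {Ω : Type*} {mΩ : MeasurableSpace Ω} {P : Measure Ω} {ℱ : Filtration ℕ mΩ}
  {X Y : ℕ → Ω → ℝ} {a l s : ℝ} {N : ℕ}

theorem mul_measureReal_exists_le_le_integral_of_supermartingale [IsFiniteMeasure P]
    (hY : Supermartingale Y ℱ P) (hY_nonneg : 0 ≤ Y) (ε : ℝ) (N : ℕ) :
    ε * P.real {ω | ∃ n ≤ N, ε ≤ Y n ω} ≤ ∫ ω, Y 0 ω ∂P := by
  set τ : Ω → WithTop ℕ := fun ω => (hittingBtwn Y (Set.Ici ε) 0 N ω : ℕ)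
  have hτ : IsStoppingTime ℱ τ :=
    hY.stronglyAdapted.adapted.isStoppingTime_hittingBtwn measurableSet_Ici
  have hτ_le : ∀ ω, τ ω ≤ N := fun ω => WithTop.coe_le_coe.mpr (hittingBtwn_le ω)
  have h_event : {ω | ∃ n ≤ N, ε ≤ Y n ω} = {ω | ε ≤ stoppedValue Y τ ω} := by
    ext ω
    exact ⟨fun ⟨n, hn, hω⟩ =>
      stoppedValue_hittingBtwn_mem (s := Set.Ici ε) ⟨n, ⟨n.zero_le, hn⟩, hω⟩,
      fun hω => ⟨hittingBtwn Y (Set.Ici ε) 0 N ω, hittingBtwn_le ω, hω⟩⟩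
  have h_optional_stopping : ∫ ω, stoppedValue Y τ ω ∂P ≤ ∫ ω, Y 0 ω ∂P := by
    simpa [stoppedValue, integral_neg] using
      hY.neg.expected_stoppedValue_mono (isStoppingTime_const ℱ 0) hτ (fun _ => zero_le) hτ_le
  calc ε * P.real {ω | ∃ n ≤ N, ε ≤ Y n ω}
      = ε * P.real {ω | ε ≤ stoppedValue Y τ ω} := by rw [h_event]
    _ ≤ ∫ ω, stoppedValue Y τ ω ∂P :=
        mul_meas_ge_le_integral_of_nonneg (ae_of_all _ fun ω => hY_nonneg _ ω)
          (integrable_stoppedValue ℕ hτ hY.integrable hτ_le) ε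
    _ ≤ ∫ ω, Y 0 ω ∂P := h_optional_stopping

theorem condExp_exp_mul_le_exp_half_sq [IsFiniteMeasure P] {m : MeasurableSpace Ω} (hm : m ≤ mΩ)
    {D : Ω → ℝ} (ha : 0 < a) (hl : 0 ≤ l) (hD : Integrable D P) (hD_mean : P[D | m] ≤ᵐ[P] 0)
    (hD_bdd : ∀ᵐ ω ∂P, |D ω| ≤ a) :
    P[fun ω => Real.exp (l * D ω) | m] ≤ᵐ[P] fun _ => Real.exp ((l * a) ^ 2 / 2) := by
  set c : ℝ := Real.sinh (l * a) / a
  have hc : 0 ≤ c := div_nonneg (Real.sinh_nonneg_iff.mpr (by positivity)) ha.le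
  have h_int : Integrable (fun ω => Real.exp (l * D ω)) P :=
    integrable_exp_mul_of_le l a hl hD.aemeasurable (hD_bdd.mono fun _ => le_of_abs_le)
  have h_chord : (fun ω => Real.exp (l * D ω)) ≤ᵐ[P] (fun _ => Real.cosh (l * a)) + c • D := by
    filter_upwards [hD_bdd] with ω hω
    have h := Real.exp_mul_le_cosh_add_mul_sinh (t := D ω / a)
      (by rwa [abs_div, abs_of_pos ha, div_le_one ha]) (l * a)
    calc Real.exp (l * D ω) = Real.exp (D ω / a * (l * a)) := by field_simp
      _ ≤ Real.cosh (l * a) + D ω / a * Real.sinh (l * a) := h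
      _ = Real.cosh (l * a) + c * D ω := by ring
  filter_upwards [condExp_mono (m := m) h_int ((integrable_const _).add (hD.smul c)) h_chord,
    condExp_add (integrable_const (Real.cosh (l * a))) (hD.smul c) m, condExp_smul c D m, hD_mean]
    with ω h_le h_add h_smul h_mean
  calc P[fun ω => Real.exp (l * D ω) | m] ω
      ≤ Real.cosh (l * a) + c * P[D | m] ω := by
        simpa [h_add, h_smul, condExp_const hm] using h_le
    _ ≤ Real.cosh (l * a) := add_le_of_nonpos_right (mul_nonpos_of_nonneg_of_nonpos hc h_mean)
    _ ≤ Real.exp ((l * a) ^ 2 / 2) := Real.cosh_le_exp_half_sq _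

theorem condExp_sub_le_zero_of_supermartingale [SigmaFiniteFiltration P ℱ]
    (hX : Supermartingale X ℱ P) {m n : ℕ} (hmn : m ≤ n) : P[X n - X m | ℱ m] ≤ᵐ[P] 0 := by
  filter_upwards [condExp_sub (hX.integrable n) (hX.integrable m) (ℱ m), hX.condExp_ae_le hmn]
    with ω h_sub h_le
  rw [h_sub, Pi.sub_apply, condExp_of_stronglyMeasurable (ℱ.le m) (hX.stronglyMeasurable m)
    (hX.integrable m)]
  exact sub_nonpos_of_le h_le

theorem ae_le_mul_of_abs_sub_le (h_zero : X 0 ≤ᵐ[P] 0)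
    (h_bdd : ∀ n, ∀ᵐ ω ∂P, |X (n + 1) ω - X n ω| ≤ a) (n : ℕ) :
    ∀ᵐ ω ∂P, X n ω ≤ n * a := by
  induction n with
  | zero => simpa [Filter.EventuallyLE] using h_zero
  | succ n ih =>
    filter_upwards [ih, h_bdd n] with ω h_le h_step
    push_cast
    linarith [le_of_abs_le h_step]

theorem supermartingale_exp_mul_sub [IsFiniteMeasure P] (hX : Supermartingale X ℱ P) (ha : 0 < a)
    (hl : 0 ≤ l) (h_zero : X 0 ≤ᵐ[P] 0) (h_bdd : ∀ n, ∀ᵐ ω ∂P, |X (n + 1) ω - X n ω| ≤ a) :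
    Supermartingale (fun n ω => Real.exp (l * X n ω - n * ((l * a) ^ 2 / 2))) ℱ P := by
  set b : ℝ := (l * a) ^ 2 / 2
  set Y : ℕ → Ω → ℝ := fun n ω => Real.exp (l * X n ω - n * b)
  have hY_meas : StronglyAdapted ℱ Y := fun n =>
    Real.continuous_exp.comp_stronglyMeasurable
      (((hX.stronglyMeasurable n).const_mul l).sub stronglyMeasurable_const)
  have hY_int : ∀ n, Integrable (Y n) P := fun n => by
    simpa only [Y, Real.exp_sub] using (integrable_exp_mul_of_le l (n * a) hl
      (hX.integrable n).aemeasurable (ae_le_mul_of_abs_sub_le h_zero h_bdd n)).div_const _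
  refine supermartingale_nat hY_meas hY_int fun n => ?_
  set D : Ω → ℝ := X (n + 1) - X n
  set Z : Ω → ℝ := fun ω => Real.exp (l * D ω)
  have hD : Integrable D P := (hX.integrable (n + 1)).sub (hX.integrable n)
  have hZ_int : Integrable Z P :=
    integrable_exp_mul_of_le l a hl hD.aemeasurable ((h_bdd n).mono fun _ => le_of_abs_le)
  have hY_succ : Y (n + 1) = (Real.exp (-b) • Y n) * Z := by
    ext ω
    simp only [Y, Z, D, Pi.mul_apply, Pi.smul_apply, smul_eq_mul, ← Real.exp_add, Pi.sub_apply]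
    push_cast
    ring_nf
  rw [hY_succ]
  filter_upwards [condExp_mul_of_stronglyMeasurable_left ((hY_meas n).const_smul (Real.exp (-b)))
      (hY_succ ▸ hY_int (n + 1)) hZ_int,
    condExp_exp_mul_le_exp_half_sq (ℱ.le n) ha hl hD
      (condExp_sub_le_zero_of_supermartingale hX n.le_succ) (h_bdd n)] with ω h_pull_out h_le
  calc _ = Real.exp (-b) * Y n ω * P[Z | ℱ n] ω := h_pull_out
    _ ≤ Real.exp (-b) * Y n ω * Real.exp b := by gcongr
    _ = Y n ω := by rw [mul_right_comm, ← Real.exp_add, neg_add_cancel, Real.exp_zero, one_mul]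

theorem supermartingale_min [IsFiniteMeasure P]
    (h_adapted : ∀ n ≤ N, StronglyMeasurable[ℱ n] (X n)) (h_int : ∀ n ≤ N, Integrable (X n) P)
    (h_succ : ∀ n < N, P[X (n + 1) | ℱ n] ≤ᵐ[P] X n) :
    Supermartingale (fun n => X (min n N)) ℱ P := by
  have h_meas : ∀ n, StronglyMeasurable[ℱ n] (X (min n N)) := fun n =>
    (h_adapted _ (min_le_right n N)).mono (ℱ.mono (min_le_left n N))
  refine supermartingale_nat h_meas (fun n => h_int _ (min_le_right n N)) fun n => ?_
  rcases lt_or_ge n N with hn | hn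
  · simpa only [min_eq_left hn.le, min_eq_left (Nat.succ_le_of_lt hn)] using h_succ n hn
  · have h_frozen : X (min (n + 1) N) = X (min n N) := by
      rw [min_eq_right hn, min_eq_right (hn.trans n.le_succ)]
    rw [h_frozen, condExp_of_stronglyMeasurable (ℱ.le n) (h_meas n) (h_int _ (min_le_right n N))]

theorem measureReal_exists_le_le_exp_of_supermartingale [IsProbabilityMeasure P]
    (hX : Supermartingale X ℱ P) (ha : 0 < a) (h_zero : X 0 ≤ᵐ[P] 0)
    (h_bdd : ∀ n, ∀ᵐ ω ∂P, |X (n + 1) ω - X n ω| ≤ a) (hN : 1 ≤ N) (hs : 0 ≤ s) :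
    P.real {ω | ∃ n ≤ N, s ≤ X n ω} ≤ Real.exp (-s ^ 2 / (2 * N * a ^ 2)) := by
  have : (0 : ℝ) < N := by exact_mod_cast hN
  set l : ℝ := s / (N * a ^ 2) with hl_def
  have hl : 0 ≤ l := by positivity
  set b : ℝ := (l * a) ^ 2 / 2 with hb_def
  set Y : ℕ → Ω → ℝ := fun n ω => Real.exp (l * X n ω - n * b)
  set ε : ℝ := Real.exp (l * s - N * b)
  have h_event : {ω | ∃ n ≤ N, s ≤ X n ω} ⊆ {ω | ∃ n ≤ N, ε ≤ Y n ω} := by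
    rintro ω ⟨n, hn, hω⟩
    refine ⟨n, hn, Real.exp_le_exp.mpr ?_⟩
    gcongr
  have hY : Supermartingale Y ℱ P := supermartingale_exp_mul_sub hX ha hl h_zero h_bdd
  have hY_zero : ∫ ω, Y 0 ω ∂P ≤ 1 := by
    calc ∫ ω, Y 0 ω ∂P ≤ ∫ _, 1 ∂P := by
          refine integral_mono_ae (hY.integrable 0) (integrable_const 1) ?_
          filter_upwards [h_zero] with ω hω
          simpa [Y] using mul_nonpos_of_nonneg_of_nonpos hl hω
      _ = 1 := by simp
  have h_max : ε * P.real {ω | ∃ n ≤ N, ε ≤ Y n ω} ≤ 1 :=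
    (mul_measureReal_exists_le_le_integral_of_supermartingale hY
      (fun _ _ => (Real.exp_pos _).le) ε N).trans hY_zero
  calc P.real {ω | ∃ n ≤ N, s ≤ X n ω} ≤ P.real {ω | ∃ n ≤ N, ε ≤ Y n ω} :=
        measureReal_mono h_event
    _ ≤ ε⁻¹ := by rwa [← one_div, le_div_iff₀' (Real.exp_pos _)]
    _ = Real.exp (-s ^ 2 / (2 * N * a ^ 2)) := by
        rw [← Real.exp_neg, hb_def, hl_def]
        congr 1
        field_simp
        ring

theorem measureReal_exists_le_le_exp_of_condExp_succ_le [IsProbabilityMeasure P]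
    (h_adapted : ∀ n ≤ N, StronglyMeasurable[ℱ n] (X n)) (h_int : ∀ n ≤ N, Integrable (X n) P)
    (h_zero : X 0 ≤ᵐ[P] 0) (h_succ : ∀ n < N, P[X (n + 1) | ℱ n] ≤ᵐ[P] X n) (ha : 0 < a)
    (h_bdd : ∀ n < N, ∀ᵐ ω ∂P, |X (n + 1) ω - X n ω| ≤ a) (hN : 1 ≤ N) (hs : 0 ≤ s) :
    P.real {ω | ∃ n ≤ N, s ≤ X n ω} ≤ Real.exp (-s ^ 2 / (2 * N * a ^ 2)) := by
  have h_bdd_min : ∀ n, ∀ᵐ ω ∂P, |X (min (n + 1) N) ω - X (min n N) ω| ≤ a := fun n => by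
    rcases lt_or_ge n N with hn | hn
    · simpa only [min_eq_left hn.le, min_eq_left (Nat.succ_le_of_lt hn)] using h_bdd n hn
    · simp [min_eq_right hn, min_eq_right (hn.trans n.le_succ), ha.le]
  calc P.real {ω | ∃ n ≤ N, s ≤ X n ω} ≤ P.real {ω | ∃ n ≤ N, s ≤ X (min n N) ω} :=
        measureReal_mono fun ω ⟨n, hn, hω⟩ => ⟨n, hn, by rwa [min_eq_left hn]⟩
    _ ≤ Real.exp (-s ^ 2 / (2 * N * a ^ 2)) :=
        measureReal_exists_le_le_exp_of_supermartingale
          (supermartingale_min h_adapted h_int h_succ) ha (by simpa using h_zero) h_bdd_min hN hs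

end SupermartingaleTail

section LevelCrossing

variable {Ω T E ι : Type*} {mΩ : MeasurableSpace Ω}

theorem aemeasurable_uncurry_of_ae_continuous {β : Type*} [TopologicalSpace T]
    [TopologicalSpace.MetrizableSpace T] [SecondCountableTopology T] [MeasurableSpace T]
    [OpensMeasurableSpace T] [TopologicalSpace β] [TopologicalSpace.PseudoMetrizableSpace β]
    [MeasurableSpace β] [BorelSpace β] [Zero β] {ν : Measure T} {P : Measure Ω} [SFinite P]
    {f : T → Ω → β} (hf_meas : ∀ x, Measurable (f x))
    (hf_cont : ∀ᵐ ω ∂P, Continuous fun x => f x ω) :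
    AEMeasurable (Function.uncurry f) (ν.prod P) := by
  obtain ⟨G, hG_ae, hG_meas, hG_cont⟩ := hf_cont.exists_measurable_mem
  set g : T → Ω → β := fun x => G.indicator (f x)
  have hg_cont : ∀ ω, Continuous fun x => g x ω := fun ω => by
    by_cases hω : ω ∈ G
    · simpa [g, hω] using hG_cont ω hω
    · simpa [g, hω] using continuous_const
  have hg_meas : Measurable (Function.uncurry g) :=
    measurable_uncurry_of_continuous_of_measurable hg_cont fun x => (hf_meas x).indicator hG_meas
  refine ⟨Function.uncurry g, hg_meas, ?_⟩
  filter_upwards [Measure.quasiMeasurePreserving_snd.ae hG_ae] with z hz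
  exact (Set.indicator_of_mem hz (f z.1)).symm

theorem mul_measure_exists_le_le_of_oscillation [Countable ι] [MetricSpace T]
    [SecondCountableTopology T] [MeasurableSpace T] [OpensMeasurableSpace T] {ν : Measure T}
    [SFinite ν] {P : Measure Ω} [SFinite P] {f : ι → T → Ω → ℝ} {r γ t : ℝ} {c p : ENNReal}
    (hf_meas : ∀ i x, Measurable (f i x))
    (hf_cont : ∀ᵐ ω ∂P, ∀ i, Continuous fun x => f i x ω)
    (hf_osc : ∀ᵐ ω ∂P, ∀ i x y, dist y x < r → f i x ω - f i y ω ≤ γ)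
    (h_ball : ∀ x, c ≤ ν (Metric.ball x r))
    (h_tail : ∀ x, P {ω | ∃ i, t - γ ≤ f i x ω} ≤ p) :
    c * P {ω | ∃ i x, t ≤ f i x ω} ≤ p * ν Set.univ := by
  set A : Set (T × Ω) := {z | ∃ i, t - γ ≤ f i z.1 z.2}
  set F : T → Ω → ENNReal := fun x ω => A.indicator 1 (x, ω)
  have hA : NullMeasurableSet A (ν.prod P) := by
    simp only [A, Set.ofPred_exists]
    exact .iUnion fun i => nullMeasurableSet_le aemeasurable_const
      (aemeasurable_uncurry_of_ae_continuous (hf_meas i) (hf_cont.mono fun ω h => h i))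
  have hF : AEMeasurable (Function.uncurry F) (ν.prod P) := aemeasurable_one.indicator₀ hA
  have h_crossing : ∀ᵐ ω ∂P, (∃ i x, t ≤ f i x ω) → c ≤ ∫⁻ x, F x ω ∂ν := by
    filter_upwards [hf_osc] with ω h_osc
    rintro ⟨i, x, hx⟩
    calc c ≤ ν (Metric.ball x r) := h_ball x
      _ = ∫⁻ y, (Metric.ball x r).indicator 1 y ∂ν :=
        (lintegral_indicator_one measurableSet_ball).symm
      _ ≤ ∫⁻ y, F y ω ∂ν := by
        refine lintegral_mono (Set.indicator_le fun y hy => ?_)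
        have hyA : (y, ω) ∈ A := ⟨i, by linarith [h_osc i x y hy]⟩
        simp [F, hyA]
  calc c * P {ω | ∃ i x, t ≤ f i x ω} ≤ c * P {ω | c ≤ ∫⁻ x, F x ω ∂ν} := by
        gcongr 1
        exact measure_mono_ae h_crossing
    _ ≤ ∫⁻ ω, ∫⁻ x, F x ω ∂ν ∂P := mul_meas_ge_le_lintegral₀ hF.lintegral_prod_left' c
    _ = ∫⁻ x, ∫⁻ ω, F x ω ∂P ∂ν := (lintegral_lintegral_swap hF).symm
    _ ≤ ∫⁻ _, p ∂ν :=
        lintegral_mono fun x => (lintegral_indicator_one_le _).trans (h_tail x)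
    _ = p * ν Set.univ := lintegral_const p

theorem comap_subtype_coe_ball [PseudoMetricSpace E] [MeasurableSpace E] (μ : Measure E)
    {U : Set E} (hU : MeasurableSet U) (x : U) (r : ℝ) :
    μ.comap (Subtype.val : U → E) (Metric.ball x r) = μ (Metric.ball (x : E) r ∩ U) := by
  rw [comap_subtype_coe_apply hU]
  congr 1
  ext y
  simp

theorem le_ofReal_div_of_mul_le {x m : ENNReal} {v e : ℝ} (hv : 0 < v) (hm : m ≠ ⊤)
    (h : ENNReal.ofReal v * x ≤ ENNReal.ofReal e * m) :
    x ≤ ENNReal.ofReal (m.toReal * e / v) := by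
  rw [ENNReal.ofReal_div_of_pos hv, ENNReal.ofReal_mul ENNReal.toReal_nonneg,
    ENNReal.ofReal_toReal hm, mul_comm m]
  exact (ENNReal.le_div_iff_mul_le (.inl (by simpa using hv)) (.inl ENNReal.ofReal_ne_top)).mpr
    (mul_comm x _ ▸ h)

end LevelCrossing

theorem martingale_field_maximal_inequality_general {E Ω : Type*} [MetricSpace E]
    [SecondCountableTopology E] [MeasurableSpace E] [OpensMeasurableSpace E] (μ : Measure E)
    {U : Set E} (hU : MeasurableSet U) (hμU : μ U ≠ ⊤) {mΩ : MeasurableSpace Ω} (P : Measure Ω)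
    [IsProbabilityMeasure P] (ℱ : Filtration ℕ mΩ) {N : ℕ} (hN : 1 ≤ N) (M : ℕ → E → Ω → ℝ)
    {a L γ t v : ℝ} (ha : 0 < a) (hL : 0 < L) (ht : γ ≤ t) (hv : 0 < v)
    (h_ball : ∀ θ ∈ U, ENNReal.ofReal v ≤ μ (Metric.ball θ (γ / L) ∩ U))
    (h_adapted : ∀ θ ∈ U, ∀ n ≤ N, StronglyMeasurable[ℱ n] (M n θ))
    (h_int : ∀ θ ∈ U, ∀ n ≤ N, Integrable (M n θ) P)
    (h_zero : ∀ θ ∈ U, M 0 θ ≤ᵐ[P] 0)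
    (h_succ : ∀ θ ∈ U, ∀ n < N, P[M (n + 1) θ | ℱ n] ≤ᵐ[P] M n θ)
    (h_bdd : ∀ θ ∈ U, ∀ n < N, ∀ᵐ ω ∂P, |M (n + 1) θ ω - M n θ ω| ≤ a)
    (h_lip : ∀ᵐ ω ∂P, ∀ n, 1 ≤ n → n ≤ N →
      ∀ θ ∈ U, ∀ θ' ∈ U, |M n θ ω - M n θ' ω| ≤ L * dist θ θ') :
    P {ω | ∃ n, 1 ≤ n ∧ n ≤ N ∧ ∃ θ ∈ U, t ≤ M n θ ω}
      ≤ ENNReal.ofReal ((μ U).toReal * Real.exp (-(t - γ) ^ 2 / (2 * N * a ^ 2)) / v) := by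
  set f : Set.Icc 1 N → U → Ω → ℝ := fun n θ => M n θ
  set ν : Measure U := μ.comap Subtype.val
  have hν_univ : ν Set.univ = μ U := by simp [ν, comap_subtype_coe_apply hU]
  have : IsFiniteMeasure ν := ⟨by rw [hν_univ]; exact hμU.lt_top⟩
  have hf_meas : ∀ n θ, Measurable (f n θ) := fun n θ =>
    ((h_adapted θ θ.2 n n.2.2).mono (ℱ.le n)).measurable
  have hf_cont : ∀ᵐ ω ∂P, ∀ n, Continuous fun θ => f n θ ω := by
    filter_upwards [h_lip] with ω h n
    have h_lipschitz : LipschitzWith ⟨L, hL.le⟩ fun θ => f n θ ω :=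
      LipschitzWith.of_dist_le_mul fun θ θ' => h n n.2.1 n.2.2 θ θ.2 θ' θ'.2
    exact h_lipschitz.continuous
  have hf_osc : ∀ᵐ ω ∂P, ∀ n θ θ', dist θ' θ < γ / L → f n θ ω - f n θ' ω ≤ γ := by
    filter_upwards [h_lip] with ω h n θ θ' h_dist
    calc f n θ ω - f n θ' ω ≤ L * dist θ θ' :=
          le_of_abs_le (h n n.2.1 n.2.2 θ θ.2 θ' θ'.2)
      _ ≤ L * (γ / L) := by rw [dist_comm]; gcongr
      _ = γ := mul_div_cancel₀ γ hL.ne'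
  have hf_tail : ∀ θ, P {ω | ∃ n, t - γ ≤ f n θ ω}
      ≤ ENNReal.ofReal (Real.exp (-(t - γ) ^ 2 / (2 * N * a ^ 2))) := fun θ =>
    calc P {ω | ∃ n, t - γ ≤ f n θ ω} ≤ P {ω | ∃ n ≤ N, t - γ ≤ M n θ ω} :=
          measure_mono fun ω ⟨n, hω⟩ => ⟨n, n.2.2, hω⟩
      _ = ENNReal.ofReal (P.real {ω | ∃ n ≤ N, t - γ ≤ M n θ ω}) :=
          (ofReal_measureReal (μ := P)).symm
      _ ≤ ENNReal.ofReal (Real.exp (-(t - γ) ^ 2 / (2 * N * a ^ 2))) :=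
          ENNReal.ofReal_le_ofReal <| measureReal_exists_le_le_exp_of_condExp_succ_le
            (h_adapted θ θ.2) (h_int θ θ.2) (h_zero θ θ.2) (h_succ θ θ.2) ha (h_bdd θ θ.2) hN
            (sub_nonneg_of_le ht)
  have h_mul := mul_measure_exists_le_le_of_oscillation hf_meas hf_cont hf_osc
    (fun θ => comap_subtype_coe_ball μ hU θ _ ▸ h_ball θ θ.2) hf_tail
  rw [hν_univ] at h_mul
  simpa [f, and_assoc] using le_ofReal_div_of_mul_le hv hμU h_mul

/-- Maximal inequality for a martingale random field (Azuma–Hoeffding combined with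
the level-crossing aggregation lemma, used in the proof of Theorem 1): for a family
`{M_n(θ)}` of martingales with `M_0(θ) = 0`, increments bounded by `a`, and a.s.
continuous `Nκ`-Lipschitz sample paths on the compact set `U` satisfying the
`(δb, d)`-corner condition,
`P(max_{1≤n≤N} sup_{θ∈U} M_n(θ) ≥ t) ≤ m(U) exp(−(t−γ)²/(2Na²)) (Nκ)^d/(γ^d δb)`. -/
theorem martingale_field_maximal_inequality
    (d : ℕ) (U : Set (EuclideanSpace ℝ (Fin d)))
    (hUcomp : IsCompact U)
    (δb : ℝ) (hδb : 0 < δb)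
    (hcorner : ∀ θ ∈ U, ∀ s : ℝ, 0 < s →
      ENNReal.ofReal (min (δb * s ^ d) 1) ≤ volume (Metric.ball θ s ∩ U))
    {Ω : Type*} {mΩ : MeasurableSpace Ω} (P : Measure Ω) [IsProbabilityMeasure P]
    (ℱ : Filtration ℕ mΩ) (N : ℕ) (hN : 1 ≤ N)
    (M : ℕ → EuclideanSpace ℝ (Fin d) → Ω → ℝ)
    (a : ℝ) (ha : 0 < a) (κ : ℝ) (hκ : 0 < κ)
    (hadapt : ∀ θ ∈ U, ∀ n ≤ N, StronglyMeasurable[ℱ n] (M n θ))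
    (hint : ∀ θ ∈ U, ∀ n ≤ N, Integrable (M n θ) P)
    (hM0 : ∀ θ ∈ U, ∀ᵐ ω ∂P, M 0 θ ω = 0)
    (hmart : ∀ θ ∈ U, ∀ n, 1 ≤ n → n ≤ N →
      P[M n θ | ℱ (n - 1)] =ᵐ[P] M (n - 1) θ)
    (hbdd : ∀ θ ∈ U, ∀ n, 1 ≤ n → n ≤ N →
      ∀ᵐ ω ∂P, |M n θ ω - M (n - 1) θ ω| ≤ a)
    (hcontLip : ∀ᵐ ω ∂P, ∀ n, 1 ≤ n → n ≤ N →
      ContinuousOn (fun θ => M n θ ω) U ∧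
        ∀ θ ∈ U, ∀ θ' ∈ U, |M n θ ω - M n θ' ω| ≤ (N : ℝ) * κ * ‖θ - θ'‖)
    (γ t : ℝ) (hγ : 0 < γ)
    (hsmall : δb * (γ / ((N : ℝ) * κ)) ^ d ≤ 1) (ht : γ < t) :
    P {ω | ∃ n, 1 ≤ n ∧ n ≤ N ∧ ∃ θ ∈ U, t ≤ M n θ ω}
      ≤ ENNReal.ofReal ((volume U).toReal
          * Real.exp (-(t - γ) ^ 2 / (2 * (N : ℝ) * a ^ 2))
          * ((N : ℝ) * κ) ^ d / (γ ^ d * δb)) := by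
  have hL : 0 < (N : ℝ) * κ := by positivity
  have h_ball : ∀ θ ∈ U, ENNReal.ofReal (δb * (γ / (N * κ)) ^ d)
      ≤ volume (Metric.ball θ (γ / (N * κ)) ∩ U) := fun θ hθ =>
    min_eq_left hsmall ▸ hcorner θ hθ _ (div_pos hγ hL)
  convert martingale_field_maximal_inequality_general volume hUcomp.measurableSet
    hUcomp.measure_ne_top P ℱ hN M ha hL ht.le (by positivity) h_ball hadapt hint
    (fun θ hθ => (hM0 θ hθ).mono fun _ h => h.le)
    (fun θ hθ n hn => (hmart θ hθ (n + 1) n.succ_pos hn).le)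
    (fun θ hθ n hn => hbdd θ hθ (n + 1) n.succ_pos hn)
    (by simpa only [dist_eq_norm] using hcontLip.mono fun _ h n h₁ h₂ => (h n h₁ h₂).2) using 2
  rw [div_pow]
  field_simp
end

section
/- Under the sequential pairwise-comparison model described in the context, there exist constants c_1, c_2 > 0, depending only on K, W, κ_0, κ_I and δ_b, such that the following holds: for every θ ∈ W, every ε_1 > 0, every ε_λ ∈ (0, 1], and all integers 1 ≤ n ≤ m, if min_{1≤t≤m} min_{a∈𝒜} λ_t^a ≥ ε_λ almost surely, then P_θ( sup_{n ≤ t ≤ m} ‖θ̂^{(t)} − θ‖ ≥ ε_1 ) ≤ c_2 · m^K · exp( −c_1 · n · ε_λ^2 · ε_1^4 ). -/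
open MeasureTheory

/-! Under `P_θ`, tilt the likelihood ratio of a competitor `y` against `θ` by the power `1 / (4B)`,
where `B ≥ 2` bounds the log-likelihood ratio `Y` of one round. Since `exp Y` has mean one, the
divergence of an arm is the mean of `exp Y - 1 - Y`, which dominates the mean of `Y ^ 2 / (2B)`;
hence one round on arm `a` multiplies the tilted ratio by at most `1 - KL_a / (8B)` on average, and
never increases its mean on another arm. An arm that separates `y` from `θ` is selected with
conditional probability at least `ε_λ`, so the tilted ratio at time `t` has mean at most
`exp (-t ε_λ KL_a / (8B))`, and Markov's inequality controls it at a single `y`. The log-likelihood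
at `t ≤ m` moves by at most `κ` between points at distance `1 / m`, so a union bound over a
`1 / m`-net of the parameters at distance at least `ε₁` from `θ`, of cardinality `O(m ^ d)`, and
over the at most `m` times of the window suffices. -/

/-! ### Covering a bounded set by few small balls -/

open Metric Module in
lemma card_le_of_isSeparated_of_subset_closedBall {E : Type*} [NormedAddCommGroup E]
    [NormedSpace ℝ E] [FiniteDimensional ℝ E] {s : Finset E} {c : E} {R : ℝ} {ε : NNReal}
    (hε : 0 < ε) (hR : 0 ≤ R) (hs : (s : Set E) ⊆ closedBall c R)
    (hsep : IsSeparated ε (s : Set E)) :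
    (s.card : ℝ) ≤ (2 * R / ε + 1) ^ finrank ℝ E := by
  borelize E
  let μ : Measure E := Measure.addHaar
  have hr : 0 < (ε / 2 : ℝ) := by positivity
  have hR' : 0 < R + (ε / 2 : ℝ) := by positivity
  have hdisj : (s : Set E).PairwiseDisjoint fun x => ball x (ε / 2 : ℝ) := fun x hx y hy hxy => by
    refine ball_disjoint_ball ?_
    have h : (ε : ENNReal) < edist x y := hsep hx hy hxy
    rw [edist_nndist, ENNReal.coe_lt_coe, ← NNReal.coe_lt_coe, coe_nndist] at h
    linarith
  have hsub : ⋃ x ∈ s, ball x (ε / 2 : ℝ) ⊆ ball c (R + ε / 2) :=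
    Set.iUnion₂_subset fun x hx => ball_subset_ball' (by linarith [mem_closedBall.1 (hs hx)])
  have hvol : s.card * ENNReal.ofReal ((ε / 2 : ℝ) ^ finrank ℝ E)
      ≤ ENNReal.ofReal ((R + ε / 2) ^ finrank ℝ E) := by
    refine (ENNReal.mul_le_mul_iff_left (measure_ball_pos μ 0 one_pos).ne'
      measure_ball_lt_top.ne).1 ?_
    calc s.card * ENNReal.ofReal ((ε / 2 : ℝ) ^ finrank ℝ E) * μ (ball 0 1)
        = μ (⋃ x ∈ s, ball x (ε / 2 : ℝ)) := by
          rw [measure_biUnion_finset hdisj fun _ _ => measurableSet_ball]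
          simp only [μ.addHaar_ball_of_pos _ hr, Finset.sum_const, nsmul_eq_mul, mul_assoc]
      _ ≤ μ (ball c (R + ε / 2)) := measure_mono hsub
      _ = ENNReal.ofReal ((R + ε / 2) ^ finrank ℝ E) * μ (ball 0 1) :=
          μ.addHaar_ball_of_pos c hR'
  have hreal : (s.card : ℝ) * (ε / 2 : ℝ) ^ finrank ℝ E ≤ (R + ε / 2) ^ finrank ℝ E := by
    rwa [← ENNReal.ofReal_natCast, ← ENNReal.ofReal_mul (by positivity),
      ENNReal.ofReal_le_ofReal_iff (by positivity)] at hvol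
  calc (s.card : ℝ) ≤ (R + ε / 2) ^ finrank ℝ E / (ε / 2) ^ finrank ℝ E :=
        (le_div_iff₀ (by positivity)).2 hreal
    _ = (2 * R / ε + 1) ^ finrank ℝ E := by rw [← div_pow]; congr 1; field_simp

open Metric Module in
lemma exists_finset_isCover_card_le {E : Type*} [NormedAddCommGroup E]
    [NormedSpace ℝ E] [FiniteDimensional ℝ E] {S : Set E} {c : E} {R : ℝ} {ε : NNReal}
    (hε : 0 < ε) (hR : 0 ≤ R) (hS : S ⊆ closedBall c R) :
    ∃ T : Finset E, (T : Set E) ⊆ S ∧ IsCover ε S (T : Set E) ∧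
      (T.card : ℝ) ≤ (2 * R / ε + 1) ^ finrank ℝ E := by
  have hfin : packingNumber ε S ≠ ⊤ := by
    obtain ⟨N, -, hN, hcover⟩ := exists_finite_isCover_of_isCompact_closure
      (half_pos hε).ne' (isBounded_closedBall.subset hS).isCompact_closure
    rw [← mul_div_cancel₀ ε two_ne_zero]
    exact ((packingNumber_two_mul_le_externalCoveringNumber _ S).trans
      (hcover.externalCoveringNumber_le_encard)).trans_lt hN.encard_lt_top |>.ne
  have hT : (maximalSeparatedSet ε S).Finite :=
    Set.encard_ne_top_iff.1 (encard_maximalSeparatedSet hfin ▸ hfin)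
  refine ⟨hT.toFinset, ?_, ?_, card_le_of_isSeparated_of_subset_closedBall (c := c) hε hR ?_ ?_⟩ <;>
    rw [hT.coe_toFinset]
  · exact maximalSeparatedSet_subset
  · exact isCover_maximalSeparatedSet hfin
  · exact maximalSeparatedSet_subset.trans hS
  · exact isSeparated_maximalSeparatedSet

/-! ### Tilted Bernoulli likelihood ratios -/

lemma sq_le_mul_exp_sub_one_sub {y B : ℝ} (hB : 2 ≤ B) (hy : |y| ≤ B) :
    y ^ 2 ≤ 2 * B * (Real.exp y - 1 - y) := by
  obtain ⟨hBy, -⟩ := abs_le.1 hy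
  rcases le_total (-2) y with h | h
  · have hsq : (1 + y / 2) ^ 2 ≤ Real.exp y := by
      calc (1 + y / 2) ^ 2 ≤ Real.exp (y / 2) ^ 2 :=
            pow_le_pow_left₀ (by linarith) (by linarith [Real.add_one_le_exp (y / 2)]) 2
        _ = Real.exp y := by rw [← Real.exp_nat_mul]; congr 1; push_cast; ring
    nlinarith
  · nlinarith [Real.exp_pos y]

lemma exp_div_le_of_abs_le {y B : ℝ} (hB : 2 ≤ B) (hy : |y| ≤ B) :
    Real.exp (y / (4 * B)) ≤ 1 + y / (4 * B) + (Real.exp y - 1 - y) / (8 * B) := by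
  have : 0 < B := by linarith
  have hsmall : |y / (4 * B)| ≤ 1 := by
    rw [abs_div, abs_of_pos (by positivity : 0 < 4 * B), div_le_one (by positivity)]
    linarith
  have htaylor := (abs_le.1 (Real.abs_exp_sub_one_sub_id_le hsmall)).2
  have hsq : (y / (4 * B)) ^ 2 ≤ (Real.exp y - 1 - y) / (8 * B) := by
    calc (y / (4 * B)) ^ 2 = y ^ 2 / (16 * B ^ 2) := by ring
      _ ≤ 2 * B * (Real.exp y - 1 - y) / (16 * B ^ 2) := by
          gcongr
          exact sq_le_mul_exp_sub_one_sub hB hy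
      _ = (Real.exp y - 1 - y) / (8 * B) := by field_simp; ring
  linarith

/-- The Kullback-Leibler divergence of the Bernoulli law of parameter `p` from that of
parameter `q`, meaningful for `p` and `q` in `(0, 1)`. -/
noncomputable def bernoulliKL (p q : ℝ) : ℝ :=
  p * Real.log (p / q) + (1 - p) * Real.log ((1 - p) / (1 - q))

/-- The Bernoulli laws of parameters `p` and `q` are nondegenerate, and their log-likelihood ratio
is bounded by `B` at both outcomes. -/
structure LogRatioBounded (p q B : ℝ) : Prop where
  left_mem : 0 < p ∧ p < 1
  right_mem : 0 < q ∧ q < 1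
  abs_log_sub_le : |Real.log q - Real.log p| ≤ B
  abs_log_one_sub_sub_le : |Real.log (1 - q) - Real.log (1 - p)| ≤ B

-- The terms `exp y - 1` cancel on average, because a likelihood ratio has mean one.
lemma bernoulliKL_eq {p q : ℝ} (hp : 0 < p ∧ p < 1) (hq : 0 < q ∧ q < 1) :
    bernoulliKL p q =
      p * (Real.exp (Real.log q - Real.log p) - 1 - (Real.log q - Real.log p)) +
      (1 - p) * (Real.exp (Real.log (1 - q) - Real.log (1 - p)) - 1
        - (Real.log (1 - q) - Real.log (1 - p))) := by
  obtain ⟨⟨hp0, hp1⟩, hq0, hq1⟩ := And.intro hp hq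
  have hp1' : 0 < 1 - p := sub_pos.2 hp1
  have hq1' : 0 < 1 - q := sub_pos.2 hq1
  rw [bernoulliKL, Real.exp_sub, Real.exp_sub, Real.exp_log hp0, Real.exp_log hq0,
    Real.exp_log hp1', Real.exp_log hq1', Real.log_div hp0.ne' hq0.ne',
    Real.log_div hp1'.ne' hq1'.ne']
  field_simp
  ring

lemma bernoulliKL_nonneg {p q : ℝ} (hp : 0 < p ∧ p < 1) (hq : 0 < q ∧ q < 1) :
    0 ≤ bernoulliKL p q := by
  have hexp (y : ℝ) : 0 ≤ Real.exp y - 1 - y := by linarith [Real.add_one_le_exp y]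
  rw [bernoulliKL_eq hp hq]
  exact add_nonneg (mul_nonneg hp.1.le (hexp _)) (mul_nonneg (sub_pos.2 hp.2).le (hexp _))

lemma LogRatioBounded.tilted_mean_le {p q B : ℝ} (h : LogRatioBounded p q B) (hB : 2 ≤ B) :
    p * Real.exp ((Real.log q - Real.log p) / (4 * B)) +
      (1 - p) * Real.exp ((Real.log (1 - q) - Real.log (1 - p)) / (4 * B))
      ≤ 1 - bernoulliKL p q / (8 * B) := by
  have hlog : bernoulliKL p q = -(p * (Real.log q - Real.log p) +
      (1 - p) * (Real.log (1 - q) - Real.log (1 - p))) := by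
    rw [bernoulliKL, Real.log_div h.left_mem.1.ne' h.right_mem.1.ne',
      Real.log_div (sub_pos.2 h.left_mem.2).ne' (sub_pos.2 h.right_mem.2).ne']
    ring
  have h1 := mul_le_mul_of_nonneg_left (exp_div_le_of_abs_le hB h.abs_log_sub_le) h.left_mem.1.le
  have h0 := mul_le_mul_of_nonneg_left (exp_div_le_of_abs_le hB h.abs_log_one_sub_sub_le)
    (sub_pos.2 h.left_mem.2).le
  have heq := bernoulliKL_eq h.left_mem h.right_mem
  refine (add_le_add h1 h0).trans_eq ?_
  generalize Real.log q - Real.log p = y at *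
  generalize Real.log (1 - q) - Real.log (1 - p) = z at *
  calc _ = 1 + (p * y + (1 - p) * z) / (4 * B)
        + (p * (Real.exp y - 1 - y) + (1 - p) * (Real.exp z - 1 - z)) / (8 * B) := by ring
    _ = _ := by rw [← heq, ← neg_neg (p * y + _), ← hlog]; ring

/-- The log-likelihood of the outcome `x`, equal to `0` or `1`, under the Bernoulli law of
parameter `q`. -/
noncomputable def bernoulliLogLikelihood (q x : ℝ) : ℝ :=
  x * Real.log q + (1 - x) * Real.log (1 - q)

lemma LogRatioBounded.abs_bernoulliLogLikelihood_sub_le {p q B x : ℝ}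
    (h : LogRatioBounded p q B) (hx : x = 0 ∨ x = 1) :
    |bernoulliLogLikelihood q x - bernoulliLogLikelihood p x| ≤ B := by
  rcases hx with rfl | rfl
  · simpa [bernoulliLogLikelihood] using h.abs_log_one_sub_sub_le
  · simpa [bernoulliLogLikelihood] using h.abs_log_sub_le

lemma exp_bernoulliLogLikelihood_sub_div {x : ℝ} (hx : x = 0 ∨ x = 1) (p q c : ℝ) :
    Real.exp ((bernoulliLogLikelihood q x - bernoulliLogLikelihood p x) / c) =
      x * Real.exp ((Real.log q - Real.log p) / c) +
        (1 - x) * Real.exp ((Real.log (1 - q) - Real.log (1 - p)) / c) := by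
  rcases hx with rfl | rfl <;> simp [bernoulliLogLikelihood]

/-! ### Sequential comparisons -/

lemma condExp_mul_add_one_sub_mul {Ω : Type*} {m₀ mΩ : MeasurableSpace Ω} {P : Measure Ω}
    [IsFiniteMeasure P] (hm₀ : m₀ ≤ mΩ) {X U V : Ω → ℝ} (hX : Integrable X P)
    (hU : StronglyMeasurable[m₀] U) (hV : StronglyMeasurable[m₀] V)
    (hXU : Integrable (X * (U - V)) P) (hVi : Integrable V P) :
    P[X * U + (1 - X) * V | m₀] =ᵐ[P] P[X | m₀] * U + (1 - P[X | m₀]) * V := by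
  have hsplit : X * U + (1 - X) * V = X * (U - V) + V := by ring
  rw [hsplit]
  filter_upwards [condExp_add hXU hVi m₀,
    condExp_mul_of_stronglyMeasurable_right (hU.sub hV) hXU hX] with ω hadd hmul
  rw [hadd, Pi.add_apply, hmul, condExp_of_stronglyMeasurable hm₀ hV hVi]
  simp only [Pi.add_apply, Pi.mul_apply, Pi.sub_apply, Pi.one_apply]
  ring

lemma integral_mul_le_of_condExp_le {Ω : Type*} {m₀ mΩ : MeasurableSpace Ω} {P : Measure Ω}
    [IsFiniteMeasure P] (hm₀ : m₀ ≤ mΩ) {Z Y : Ω → ℝ} {ρ : ℝ} (hZ : StronglyMeasurable[m₀] Z)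
    (hZ0 : 0 ≤ Z) (hZi : Integrable Z P) (hY : Integrable Y P) (hZY : Integrable (Z * Y) P)
    (hle : P[Y | m₀] ≤ᵐ[P] fun _ => ρ) :
    ∫ ω, (Z * Y) ω ∂P ≤ (∫ ω, Z ω ∂P) * ρ := by
  rw [← integral_condExp hm₀, ← integral_mul_const]
  refine integral_mono_ae integrable_condExp (hZi.mul_const ρ) ?_
  filter_upwards [condExp_mul_of_stronglyMeasurable_left hZ hZY hY, hle] with ω hmul hω
  exact hmul.trans_le (mul_le_mul_of_nonneg_left hω (hZ0 ω))

lemma indicator_eq_one_eq_self {Ω : Type*} {X : Ω → ℝ} (hX : ∀ ω, X ω = 0 ∨ X ω = 1) :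
    {ω | X ω = 1}.indicator (fun _ => (1 : ℝ)) = X := by
  ext ω
  rcases hX ω with h | h <;> simp [h]

open ProbabilityTheory in
/-- Rounds are numbered from `1`. In round `t + 1` an arm `act (t + 1)` is selected given the past
`ℱ t`, and the binary outcome `X (t + 1)` then has success probability `p (act (t + 1))`. The
selection rule is left unspecified. -/
structure IsSequentialComparison {Ω ι : Type*} [MeasurableSpace ι] {mΩ : MeasurableSpace Ω}
    (P : Measure Ω) (ℱ : Filtration ℕ mΩ) (act : ℕ → Ω → ι) (X : ℕ → Ω → ℝ) (p : ι → ℝ) :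
    Prop where
  measurable_act (t : ℕ) : Measurable[ℱ (t + 1)] (act (t + 1))
  measurable_outcome (t : ℕ) : Measurable[ℱ (t + 1)] (X (t + 1))
  outcome_eq (t : ℕ) (ω : Ω) : X (t + 1) ω = 0 ∨ X (t + 1) ω = 1
  condExp_outcome (t : ℕ) :
    P⟦{ω | X (t + 1) ω = 1} | ℱ t ⊔ MeasurableSpace.comap (act (t + 1)) ⊤⟧ =ᵐ[P]
      fun ω => p (act (t + 1) ω)

/-- The log-likelihood of the arm parameters `q` after the rounds `1, …, t`. -/
noncomputable def logLikelihood {Ω ι : Type*} (act : ℕ → Ω → ι) (X : ℕ → Ω → ℝ) (q : ι → ℝ)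
    (t : ℕ) (ω : Ω) : ℝ :=
  ∑ s ∈ Finset.Icc 1 t, bernoulliLogLikelihood (q (act s ω)) (X s ω)

lemma logLikelihood_succ {Ω ι : Type*} (act : ℕ → Ω → ι) (X : ℕ → Ω → ℝ) (q : ι → ℝ)
    (t : ℕ) (ω : Ω) :
    logLikelihood act X q (t + 1) ω =
      logLikelihood act X q t ω + bernoulliLogLikelihood (q (act (t + 1) ω)) (X (t + 1) ω) :=
  Finset.sum_Icc_succ_top (Nat.le_add_left 1 t) _

/-- The contribution of round `t` to the log-likelihood ratio of the arm parameters `q` against `p`,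
for the selected arms `act` and the outcomes `X`. -/
noncomputable def logRatio {Ω ι : Type*} (act : ℕ → Ω → ι) (X : ℕ → Ω → ℝ) (p q : ι → ℝ)
    (t : ℕ) (ω : Ω) : ℝ :=
  bernoulliLogLikelihood (q (act t ω)) (X t ω) - bernoulliLogLikelihood (p (act t ω)) (X t ω)

namespace IsSequentialComparison

open ProbabilityTheory

variable {Ω ι : Type*} [MeasurableSpace ι] {mΩ : MeasurableSpace Ω} {P : Measure Ω}
  {ℱ : Filtration ℕ mΩ} {act : ℕ → Ω → ι} {X : ℕ → Ω → ℝ} {p q : ι → ℝ} {B ε : ℝ} {a : ι}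
  {m t : ℕ}

lemma abs_logLikelihood_sub_le (h : IsSequentialComparison P ℱ act X p) {q r : ι → ℝ}
    (hqr : ∀ b, LogRatioBounded (q b) (r b) B) (t : ℕ) (ω : Ω) :
    |logLikelihood act X r t ω - logLikelihood act X q t ω| ≤ t * B := by
  rw [logLikelihood, logLikelihood, ← Finset.sum_sub_distrib]
  refine (Finset.abs_sum_le_sum_abs _ _).trans ?_
  calc _ ≤ ∑ _s ∈ Finset.Icc 1 t, B := Finset.sum_le_sum fun s hs => by
        obtain ⟨s, rfl⟩ := Nat.exists_eq_add_of_le' (Finset.mem_Icc.1 hs).1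
        exact (hqr _).abs_bernoulliLogLikelihood_sub_le (h.outcome_eq s ω)
    _ = t * B := by simp

variable [DiscreteMeasurableSpace ι]

lemma measurable_bernoulliLogLikelihood (h : IsSequentialComparison P ℱ act X p) (q : ι → ℝ)
    (t : ℕ) :
    Measurable[ℱ (t + 1)]
      fun ω => bernoulliLogLikelihood (q (act (t + 1) ω)) (X (t + 1) ω) := by
  have hcomp (f : ι → ℝ) : Measurable[ℱ (t + 1)] fun ω => f (act (t + 1) ω) :=
    Measurable.of_discrete.comp (h.measurable_act t)
  exact ((h.measurable_outcome t).mul (hcomp fun b => Real.log (q b))).add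
    ((measurable_const.sub (h.measurable_outcome t)).mul (hcomp fun b => Real.log (1 - q b)))

lemma measurable_logLikelihood (h : IsSequentialComparison P ℱ act X p) (q : ι → ℝ) (t : ℕ) :
    Measurable[ℱ t] (logLikelihood act X q t) := by
  induction t with
  | zero => exact measurable_const
  | succ t ih =>
    rw [funext (logLikelihood_succ act X q t)]
    exact (ih.mono (ℱ.mono t.le_succ) le_rfl).add (h.measurable_bernoulliLogLikelihood q t)

lemma sup_comap_act_le (h : IsSequentialComparison P ℱ act X p) (t : ℕ) :
    ℱ t ⊔ MeasurableSpace.comap (act (t + 1)) ⊤ ≤ mΩ := by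
  refine sup_le (ℱ.le t) ?_
  rintro _ ⟨s, -, rfl⟩
  exact ℱ.le (t + 1) _ (h.measurable_act t .of_discrete)

lemma condExp_mixture (h : IsSequentialComparison P ℱ act X p) [IsFiniteMeasure P]
    {u v : ι → ℝ} {c : ℝ} (hu : ∀ b, |u b| ≤ c) (hv : ∀ b, |v b| ≤ c) (t : ℕ) :
    P[fun ω => X (t + 1) ω * u (act (t + 1) ω) + (1 - X (t + 1) ω) * v (act (t + 1) ω) |
        ℱ t ⊔ MeasurableSpace.comap (act (t + 1)) ⊤] =ᵐ[P]
      fun ω => p (act (t + 1) ω) * u (act (t + 1) ω)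
        + (1 - p (act (t + 1) ω)) * v (act (t + 1) ω) := by
  set 𝒢 := ℱ t ⊔ MeasurableSpace.comap (act (t + 1)) ⊤
  have hmeas (f : ι → ℝ) : Measurable[𝒢] fun ω => f (act (t + 1) ω) := fun s _ =>
    (le_sup_right : _ ≤ 𝒢) _ ⟨f ⁻¹' s, trivial, rfl⟩
  have hint {f : ι → ℝ} {c : ℝ} (hf : ∀ b, |f b| ≤ c) :
      Integrable (fun ω => f (act (t + 1) ω)) P :=
    .of_bound ((hmeas f).mono (h.sup_comap_act_le t) le_rfl).aestronglyMeasurable c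
      (.of_forall fun ω => hf _)
  have hXmeas := ((h.measurable_outcome t).mono (ℱ.le _) le_rfl).aestronglyMeasurable (μ := P)
  have hXbound : ∀ᵐ ω ∂P, ‖X (t + 1) ω‖ ≤ 1 :=
    .of_forall fun ω => by rcases h.outcome_eq t ω with hX | hX <;> simp [hX]
  have hmix := condExp_mul_add_one_sub_mul (h.sup_comap_act_le t)
    (.of_bound hXmeas 1 hXbound) (hmeas u).stronglyMeasurable (hmeas v).stronglyMeasurable
    (((hint hu).sub (hint hv)).bdd_mul hXmeas hXbound) (hint hv)
  refine hmix.trans ?_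
  have hp := h.condExp_outcome t
  rw [indicator_eq_one_eq_self (h.outcome_eq t)] at hp
  filter_upwards [hp] with ω hω
  simp only [Pi.add_apply, Pi.mul_apply, Pi.sub_apply, Pi.one_apply, hω]

lemma condExp_sup_exp_logRatio_le (h : IsSequentialComparison P ℱ act X p)
    [IsFiniteMeasure P] (hpq : ∀ b, LogRatioBounded (p b) (q b) B) (hB : 2 ≤ B) (t : ℕ) :
    P[fun ω => Real.exp (logRatio act X p q (t + 1) ω / (4 * B)) |
        ℱ t ⊔ MeasurableSpace.comap (act (t + 1)) ⊤] ≤ᵐ[P]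
      fun ω => 1 - bernoulliKL (p (act (t + 1) ω)) (q (act (t + 1) ω)) / (8 * B) := by
  have : 0 < B := by linarith
  have hexp {y : ℝ} (hy : |y| ≤ B) : |Real.exp (y / (4 * B))| ≤ Real.exp 1 := by
    rw [Real.abs_exp, Real.exp_le_exp, div_le_one (by positivity)]
    linarith [le_abs_self y]
  have hmix := h.condExp_mixture (t := t) (fun b => hexp (hpq b).abs_log_sub_le)
    fun b => hexp (hpq b).abs_log_one_sub_sub_le
  simp only [logRatio, exp_bernoulliLogLikelihood_sub_div (h.outcome_eq t _)]
  filter_upwards [hmix] with ω hω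
  exact hω.trans_le ((hpq _).tilted_mean_le hB)

lemma condExp_exp_logRatio_le (h : IsSequentialComparison P ℱ act X p)
    [IsProbabilityMeasure P] (hpq : ∀ b, LogRatioBounded (p b) (q b) B) (hB : 2 ≤ B)
    (hsel : (fun _ => ε) ≤ᵐ[P] P⟦{ω | act (t + 1) ω = a} | ℱ t⟧) :
    P[fun ω => Real.exp (logRatio act X p q (t + 1) ω / (4 * B)) | ℱ t]
      ≤ᵐ[P] fun _ => Real.exp (-(ε * bernoulliKL (p a) (q a) / (8 * B))) := by
  let δ (b : ι) := bernoulliKL (p b) (q b) / (8 * B)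
  let I : Ω → ℝ := {ω | act (t + 1) ω = a}.indicator fun _ => 1
  have hδ (b : ι) : 0 ≤ δ b := div_nonneg
    (bernoulliKL_nonneg (hpq b).left_mem (hpq b).right_mem) (by linarith)
  have hI : Integrable I P := (integrable_const 1).indicator
    ((h.measurable_act t).mono (ℱ.le _) le_rfl (MeasurableSet.of_discrete (s := {a})))
  have hsingle (ω : Ω) : 1 - δ (act (t + 1) ω) ≤ 1 - δ a * I ω := by
    by_cases hact : act (t + 1) ω = a
    · simp [I, hact]
    · simp [I, hact, hδ]
  have htower : P[fun ω => Real.exp (logRatio act X p q (t + 1) ω / (4 * B)) | ℱ t] ≤ᵐ[P]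
      P[(fun _ => 1) - δ a • I | ℱ t] :=
    (condExp_condExp_of_le le_sup_left (h.sup_comap_act_le t)).symm.trans_le <|
      condExp_mono integrable_condExp ((integrable_const 1).sub (hI.smul (δ a))) <| by
        filter_upwards [h.condExp_sup_exp_logRatio_le hpq hB t] with ω hω
        exact hω.trans (hsingle ω)
  filter_upwards [htower, condExp_sub (integrable_const 1) (hI.smul (δ a)) (ℱ t),
    condExp_smul (δ a) I (ℱ t), hsel] with ω hle hsub hsmul hω
  calc _ ≤ 1 - δ a * P[I | ℱ t] ω := by
        rw [hsub, Pi.sub_apply, hsmul, condExp_const (ℱ.le t)] at hle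
        exact hle
    _ ≤ 1 - δ a * ε := sub_le_sub_left (mul_le_mul_of_nonneg_left hω (hδ a)) 1
    _ ≤ Real.exp (-(δ a * ε)) := Real.one_sub_le_exp_neg _
    _ = _ := by simp only [δ]; ring_nf

lemma integrable_exp_logLikelihood_sub (h : IsSequentialComparison P ℱ act X p)
    [IsFiniteMeasure P] (hpq : ∀ b, LogRatioBounded (p b) (q b) B) {c : ℝ} (hc : 0 < c) (t : ℕ) :
    Integrable (fun ω =>
      Real.exp ((logLikelihood act X q t ω - logLikelihood act X p t ω) / c)) P := by
  have hmeas := (((h.measurable_logLikelihood q t).sub (h.measurable_logLikelihood p t)).div_const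
    c).exp.mono (ℱ.le t) le_rfl
  refine .of_bound hmeas.aestronglyMeasurable (Real.exp (t * B / c)) (.of_forall fun ω => ?_)
  rw [Real.norm_eq_abs, Real.abs_exp]
  gcongr
  exact (le_abs_self _).trans (h.abs_logLikelihood_sub_le hpq t ω)

lemma integrable_exp_logRatio (h : IsSequentialComparison P ℱ act X p)
    [IsFiniteMeasure P] (hpq : ∀ b, LogRatioBounded (p b) (q b) B) {c : ℝ} (hc : 0 < c) (t : ℕ) :
    Integrable (fun ω => Real.exp (logRatio act X p q (t + 1) ω / c)) P := by
  have hmeas := (((h.measurable_bernoulliLogLikelihood q t).sub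
    (h.measurable_bernoulliLogLikelihood p t)).div_const c).exp.mono (ℱ.le (t + 1)) le_rfl
  refine .of_bound hmeas.aestronglyMeasurable (Real.exp (B / c)) (.of_forall fun ω => ?_)
  rw [Real.norm_eq_abs, Real.abs_exp]
  gcongr
  exact (le_abs_self _).trans ((hpq _).abs_bernoulliLogLikelihood_sub_le (h.outcome_eq t ω))

lemma integral_exp_logLikelihood_sub_le (h : IsSequentialComparison P ℱ act X p)
    [IsProbabilityMeasure P] (hpq : ∀ b, LogRatioBounded (p b) (q b) B) (hB : 2 ≤ B)
    (hsel : ∀ t < m, (fun _ => ε) ≤ᵐ[P] P⟦{ω | act (t + 1) ω = a} | ℱ t⟧) (ht : t ≤ m) :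
    ∫ ω, Real.exp ((logLikelihood act X q t ω - logLikelihood act X p t ω) / (4 * B)) ∂P
      ≤ Real.exp (-(ε * bernoulliKL (p a) (q a) / (8 * B))) ^ t := by
  have hB4 : 0 < 4 * B := by linarith
  induction t with
  | zero => simp [logLikelihood]
  | succ t ih =>
    let Z : ℕ → Ω → ℝ := fun t ω =>
      Real.exp ((logLikelihood act X q t ω - logLikelihood act X p t ω) / (4 * B))
    let Y : Ω → ℝ := fun ω => Real.exp (logRatio act X p q (t + 1) ω / (4 * B))
    have hZsucc : Z (t + 1) = Z t * Y := funext fun ω => by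
      simp only [Z, Y, logRatio, logLikelihood_succ, Pi.mul_apply, ← Real.exp_add]
      ring_nf
    have hZmeas : Measurable[ℱ t] (Z t) := (((h.measurable_logLikelihood q t).sub
      (h.measurable_logLikelihood p t)).div_const _).exp
    have hZint (t : ℕ) : Integrable (Z t) P := h.integrable_exp_logLikelihood_sub hpq hB4 t
    calc ∫ ω, Z (t + 1) ω ∂P = ∫ ω, (Z t * Y) ω ∂P := by rw [hZsucc]
      _ ≤ (∫ ω, Z t ω ∂P) * Real.exp (-(ε * bernoulliKL (p a) (q a) / (8 * B))) :=
          integral_mul_le_of_condExp_le (ℱ.le t) hZmeas.stronglyMeasurable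
            (fun ω => (Real.exp_pos _).le) (hZint t) (h.integrable_exp_logRatio hpq hB4 t)
            (hZsucc ▸ hZint (t + 1)) (h.condExp_exp_logRatio_le hpq hB (hsel t ht))
      _ ≤ _ := by
          rw [pow_succ]
          gcongr
          exact ih (Nat.le_of_succ_le ht)

lemma measureReal_logLikelihood_sub_ge_le (h : IsSequentialComparison P ℱ act X p)
    [IsProbabilityMeasure P] (hpq : ∀ b, LogRatioBounded (p b) (q b) B) (hB : 2 ≤ B)
    (hsel : ∀ t < m, (fun _ => ε) ≤ᵐ[P] P⟦{ω | act (t + 1) ω = a} | ℱ t⟧) (ht : t ≤ m) (C : ℝ) :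
    P.real {ω | -C ≤ logLikelihood act X q t ω - logLikelihood act X p t ω}
      ≤ Real.exp (C / (4 * B)) *
        Real.exp (-(t * (ε * bernoulliKL (p a) (q a) / (8 * B)))) := by
  have hint := h.integrable_exp_logLikelihood_sub hpq (by linarith : 0 < 4 * B) t
  have hmgf := h.integral_exp_logLikelihood_sub_le hpq hB hsel ht
  simp only [div_eq_inv_mul _ (4 * B)] at hint hmgf
  refine (measure_ge_le_exp_mul_mgf (-C) (by positivity) hint).trans ?_
  calc _ = Real.exp (C / (4 * B)) * mgf _ P (4 * B)⁻¹ := by congr 2; ring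
    _ ≤ Real.exp (C / (4 * B)) * Real.exp (-(ε * bernoulliKL (p a) (q a) / (8 * B))) ^ t :=
        mul_le_mul_of_nonneg_left hmgf (Real.exp_pos _).le
    _ = _ := by rw [← Real.exp_nat_mul, mul_neg]

lemma measureReal_exists_logLikelihood_sub_ge_le {α : Type*} [IsProbabilityMeasure P]
    (h : IsSequentialComparison P ℱ act X p) {q : α → ι → ℝ} {T : Finset α} {δ : ℝ} {n : ℕ}
    (hpq : ∀ y ∈ T, ∀ b, LogRatioBounded (p b) (q y b) B) (hB : 2 ≤ B) (hδ : 0 ≤ δ) (hε : 0 ≤ ε)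
    (hKL : ∀ y ∈ T, ∃ a, δ ≤ bernoulliKL (p a) (q y a))
    (hsel : ∀ t < m, ∀ a, (fun _ => ε) ≤ᵐ[P] P⟦{ω | act (t + 1) ω = a} | ℱ t⟧)
    (hn : 1 ≤ n) (C : ℝ) :
    P.real {ω | ∃ t ∈ Finset.Icc n m, ∃ y ∈ T,
        -C ≤ logLikelihood act X (q y) t ω - logLikelihood act X p t ω}
      ≤ m * T.card * (Real.exp (C / (4 * B)) * Real.exp (-(n * (ε * δ / (8 * B))))) := by
  have hpoint : ∀ t ∈ Finset.Icc n m, ∀ y ∈ T,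
      P.real {ω | -C ≤ logLikelihood act X (q y) t ω - logLikelihood act X p t ω}
        ≤ Real.exp (C / (4 * B)) * Real.exp (-(n * (ε * δ / (8 * B)))) := fun t ht y hy => by
    obtain ⟨a, ha⟩ := hKL y hy
    obtain ⟨hnt, htm⟩ := Finset.mem_Icc.1 ht
    refine (h.measureReal_logLikelihood_sub_ge_le (hpq y hy) hB (fun s hs => hsel s hs a) htm
      C).trans ?_
    gcongr
  have hunion : {ω | ∃ t ∈ Finset.Icc n m, ∃ y ∈ T,
        -C ≤ logLikelihood act X (q y) t ω - logLikelihood act X p t ω} =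
      ⋃ t ∈ Finset.Icc n m, ⋃ y ∈ T,
        {ω | -C ≤ logLikelihood act X (q y) t ω - logLikelihood act X p t ω} := by
    ext ω; simp only [Set.mem_ofPred_eq, Set.mem_iUnion, exists_prop]
  rw [hunion]
  calc _ ≤ ∑ t ∈ Finset.Icc n m, ∑ y ∈ T,
        P.real {ω | -C ≤ logLikelihood act X (q y) t ω - logLikelihood act X p t ω} :=
        (measureReal_biUnion_finset_le _ _).trans
          (Finset.sum_le_sum fun t _ => measureReal_biUnion_finset_le _ _)
    _ ≤ ∑ _t ∈ Finset.Icc n m, ∑ _y ∈ T,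
        (Real.exp (C / (4 * B)) * Real.exp (-(n * (ε * δ / (8 * B))))) :=
        Finset.sum_le_sum fun t ht => Finset.sum_le_sum fun y hy => hpoint t ht y hy
    _ = (m + 1 - n : ℕ) * T.card *
        (Real.exp (C / (4 * B)) * Real.exp (-(n * (ε * δ / (8 * B))))) := by
        simp only [Finset.sum_const, Nat.card_Icc, nsmul_eq_mul, mul_assoc]
    _ ≤ _ := by gcongr; omega

end IsSequentialComparison

/-! ### Uniform deviations over a parameter set -/

/-- A family of comparison probabilities on the parameter set `W`, one for each arm, whose
log-likelihoods of both outcomes are `κ`-Lipschitz on `W`. -/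
structure IsComparisonFamily {ι E : Type*} [NormedAddCommGroup E] (p : ι → E → ℝ) (W : Set E)
    (κ : ℝ) : Prop where
  mem (a : ι) : ∀ θ ∈ W, 0 < p a θ ∧ p a θ < 1
  abs_log_sub_le (a : ι) : ∀ θ ∈ W, ∀ θ' ∈ W,
    |Real.log (p a θ) - Real.log (p a θ')| ≤ κ * ‖θ - θ'‖
  abs_log_one_sub_sub_le (a : ι) : ∀ θ ∈ W, ∀ θ' ∈ W,
    |Real.log (1 - p a θ) - Real.log (1 - p a θ')| ≤ κ * ‖θ - θ'‖

namespace IsComparisonFamily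

open ProbabilityTheory Metric Module

variable {ι E : Type*} [NormedAddCommGroup E] {p : ι → E → ℝ} {W S : Set E} {κ : ℝ}

lemma logRatioBounded (hp : IsComparisonFamily p W κ) {x y : E} (hx : x ∈ W) (hy : y ∈ W)
    {B : ℝ} (hB : κ * ‖y - x‖ ≤ B) (a : ι) : LogRatioBounded (p a x) (p a y) B where
  left_mem := hp.mem a x hx
  right_mem := hp.mem a y hy
  abs_log_sub_le := (hp.abs_log_sub_le a y hy x hx).trans hB
  abs_log_one_sub_sub_le := (hp.abs_log_one_sub_sub_le a y hy x hx).trans hB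

variable [MeasurableSpace ι] {Ω : Type*} {mΩ : MeasurableSpace Ω} {P : Measure Ω}
  {ℱ : Filtration ℕ mΩ} {act : ℕ → Ω → ι} {X : ℕ → Ω → ℝ} {θ : E} {n m : ℕ}

lemma exists_mem_logLikelihood_ge_of_isCover (hp : IsComparisonFamily p W κ) (hκ : 0 ≤ κ)
    (h : IsSequentialComparison P ℱ act X (p · θ)) (hSW : S ⊆ W) {T : Finset E}
    (hT : (T : Set E) ⊆ S) (hcover : IsCover (m : NNReal)⁻¹ S (T : Set E)) {t : ℕ} (ht : t ≤ m)
    {ω : Ω} {y : E} (hy : y ∈ S)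
    (hle : logLikelihood act X (p · θ) t ω ≤ logLikelihood act X (p · y) t ω) :
    ∃ z ∈ T, -κ ≤ logLikelihood act X (p · z) t ω - logLikelihood act X (p · θ) t ω := by
  obtain ⟨z, hz, hyz⟩ := hcover hy
  have hdist : ‖z - y‖ ≤ (m : ℝ)⁻¹ := by
    have hnndist : nndist y z ≤ (m : NNReal)⁻¹ := edist_le_coe.1 hyz
    rw [← dist_eq_norm, dist_comm]
    exact_mod_cast NNReal.coe_le_coe.2 hnndist
  have hdiff := h.abs_logLikelihood_sub_le
    (hp.logRatioBounded (hSW hy) (hSW (hT hz)) (mul_le_mul_of_nonneg_left hdist hκ)) t ω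
  have hscale : t * (κ * (m : ℝ)⁻¹) ≤ κ := by
    calc t * (κ * (m : ℝ)⁻¹) = κ * (t / m) := by ring
      _ ≤ κ * 1 := by
        gcongr
        exact div_le_one_of_le₀ (by exact_mod_cast ht) m.cast_nonneg
      _ = κ := mul_one κ
  exact ⟨z, hz, by linarith [neg_abs_le (logLikelihood act X (p · z) t ω
    - logLikelihood act X (p · y) t ω)]⟩

lemma measureReal_exists_logLikelihood_ge_le [NormedSpace ℝ E] [FiniteDimensional ℝ E]
    [DiscreteMeasurableSpace ι] [IsProbabilityMeasure P]
    (hp : IsComparisonFamily p W κ) (hκ : 0 ≤ κ) (h : IsSequentialComparison P ℱ act X (p · θ))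
    (hθ : θ ∈ W) {D δ ε : ℝ} (hSW : S ⊆ W) (hSD : S ⊆ closedBall θ D) (hD : 0 ≤ D) (hδ : 0 ≤ δ)
    (hε : 0 ≤ ε) (hKL : ∀ y ∈ S, ∃ a, δ ≤ bernoulliKL (p a θ) (p a y))
    (hsel : ∀ t < m, ∀ a, (fun _ => ε) ≤ᵐ[P] P⟦{ω | act (t + 1) ω = a} | ℱ t⟧)
    (hn : 1 ≤ n) (hnm : n ≤ m) :
    P.real {ω | ∃ t ∈ Finset.Icc n m, ∃ y ∈ S,
        logLikelihood act X (p · θ) t ω ≤ logLikelihood act X (p · y) t ω}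
      ≤ (2 * D + 1) ^ finrank ℝ E * Real.exp (κ / (4 * (κ * D + 2))) * m ^ (finrank ℝ E + 1) *
        Real.exp (-(n * (ε * δ / (8 * (κ * D + 2))))) := by
  have hm : 1 ≤ m := hn.trans hnm
  obtain ⟨T, hTS, hcover, hcard⟩ := exists_finset_isCover_card_le
    (ε := (m : NNReal)⁻¹) (by positivity) hD hSD
  have hcard' : (T.card : ℝ) ≤ ((2 * D + 1) * m) ^ finrank ℝ E := by
    refine hcard.trans (pow_le_pow_left₀ (by positivity) ?_ _)
    have : (1 : ℝ) ≤ m := by exact_mod_cast hm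
    simp only [NNReal.coe_inv, NNReal.coe_natCast, div_inv_eq_mul]
    linarith
  have hbounded : ∀ y ∈ T, ∀ b, LogRatioBounded (p b θ) (p b y) (κ * D + 2) := fun y hy =>
    hp.logRatioBounded hθ (hSW (hTS hy)) <| by
      linarith [mul_le_mul_of_nonneg_left (mem_closedBall_iff_norm.1 (hSD (hTS hy))) hκ]
  calc _ ≤ P.real {ω | ∃ t ∈ Finset.Icc n m, ∃ z ∈ T,
        -κ ≤ logLikelihood act X (p · z) t ω - logLikelihood act X (p · θ) t ω} :=
        measureReal_mono <| by
          rintro ω ⟨t, ht, y, hy, hle⟩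
          exact ⟨t, ht, hp.exists_mem_logLikelihood_ge_of_isCover hκ h hSW hTS hcover
            (Finset.mem_Icc.1 ht).2 hy hle⟩
    _ ≤ m * T.card * (Real.exp (κ / (4 * (κ * D + 2))) *
        Real.exp (-(n * (ε * δ / (8 * (κ * D + 2)))))) :=
        h.measureReal_exists_logLikelihood_sub_ge_le hbounded
          (le_add_of_nonneg_left (by positivity)) hδ hε (fun y hy => hKL y (hTS hy)) hsel hn κ
    _ ≤ m * ((2 * D + 1) * m) ^ finrank ℝ E * (Real.exp (κ / (4 * (κ * D + 2))) *
        Real.exp (-(n * (ε * δ / (8 * (κ * D + 2)))))) := by gcongr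
    _ = _ := by rw [mul_pow]; ring

end IsComparisonFamily

/-! ### Deviations of the maximum likelihood estimator -/

lemma exists_pos_forall_norm_sub_le {E : Type*} [SeminormedAddCommGroup E] {W : Set E}
    (hW : Bornology.IsBounded W) : ∃ D > (0 : ℝ), ∀ x ∈ W, ∀ y ∈ W, ‖x - y‖ ≤ D :=
  ⟨Metric.diam W + 1, by linarith [Metric.diam_nonneg (s := W)], fun x hx y hy => by
    linarith [dist_eq_norm x y, Metric.dist_le_diam_of_mem hW hx hy]⟩

open Module ProbabilityTheory in
theorem mle_moving_window_deviation_bound_general {ι E : Type*} [MeasurableSpace ι]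
    [DiscreteMeasurableSpace ι] [NormedAddCommGroup E] [NormedSpace ℝ E] [FiniteDimensional ℝ E]
    {W : Set E} (hW : Bornology.IsBounded W) {κ κI : ℝ} (hκ : 0 ≤ κ) (hκI : 0 < κI) :
    ∃ c1 > (0 : ℝ), ∃ c2 > (0 : ℝ), ∀ p : ι → E → ℝ, IsComparisonFamily p W κ →
      (∀ θ ∈ W, ∀ θ' ∈ W, ∃ a, κI * ‖θ - θ'‖ ^ 2 ≤ bernoulliKL (p a θ) (p a θ')) →
      ∀ θ ∈ W, ∀ ε1 : ℝ, 0 ≤ ε1 → ∀ εl : ℝ, 0 ≤ εl → ∀ n m : ℕ, 1 ≤ n → n ≤ m →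
      ∀ {Ω : Type*} {mΩ : MeasurableSpace Ω} {P : Measure Ω} [IsProbabilityMeasure P]
        {ℱ : Filtration ℕ mΩ} {act : ℕ → Ω → ι} {X : ℕ → Ω → ℝ} {θhat : ℕ → Ω → E},
        IsSequentialComparison P ℱ act X (p · θ) →
        (∀ t < m, ∀ a, (fun _ => εl) ≤ᵐ[P] P⟦{ω | act (t + 1) ω = a} | ℱ t⟧) →
        (∀ t ω, θhat t ω ∈ W) →
        (∀ t ω, IsMaxOn (fun θ' => logLikelihood act X (p · θ') t ω) W (θhat t ω)) →
        P.real {ω | ∃ t, n ≤ t ∧ t ≤ m ∧ ε1 ≤ ‖θhat t ω - θ‖}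
          ≤ c2 * m ^ (finrank ℝ E + 1) * Real.exp (-(c1 * n * εl * ε1 ^ 2)) := by
  obtain ⟨D, hD0, hD⟩ := exists_pos_forall_norm_sub_le hW
  refine ⟨κI / (8 * (κ * D + 2)), by positivity,
    (2 * D + 1) ^ finrank ℝ E * Real.exp (κ / (4 * (κ * D + 2))), by positivity, ?_⟩
  intro p hp hident θ hθ ε1 hε1 εl hεl n m hn hnm Ω mΩ P _ ℱ act X θhat h hsel hmem hmax
  let S : Set E := {y ∈ W | ε1 ≤ ‖y - θ‖}
  have hKL : ∀ y ∈ S, ∃ a, κI * ε1 ^ 2 ≤ bernoulliKL (p a θ) (p a y) := fun y hy => by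
    obtain ⟨a, ha⟩ := hident θ hθ y hy.1
    refine ⟨a, le_trans ?_ ha⟩
    rw [norm_sub_rev]
    gcongr
    exact hy.2
  calc _ ≤ P.real {ω | ∃ t ∈ Finset.Icc n m, ∃ y ∈ S,
        logLikelihood act X (p · θ) t ω ≤ logLikelihood act X (p · y) t ω} :=
        measureReal_mono <| by
          rintro ω ⟨t, hnt, htm, ht⟩
          exact ⟨t, Finset.mem_Icc.2 ⟨hnt, htm⟩, θhat t ω, ⟨hmem t ω, ht⟩, hmax t ω hθ⟩
    _ ≤ _ := hp.measureReal_exists_logLikelihood_ge_le hκ h hθ (fun y hy => hy.1)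
        (fun y hy => mem_closedBall_iff_norm.2 (hD y hy.1 θ hθ)) hD0.le (by positivity) hεl hKL
        hsel hn hnm
    _ = _ := by congr 2; ring

lemma div_sq_mul_sq_mul_pow_four_le {c N x y D : ℝ} (hc : 0 ≤ c) (hN : 0 ≤ N) (hx0 : 0 ≤ x)
    (hx1 : x ≤ 1) (hy0 : 0 ≤ y) (hyD : y ≤ D) (hD : 0 < D) :
    c / D ^ 2 * N * x ^ 2 * y ^ 4 ≤ c * N * x * y ^ 2 := by
  calc c / D ^ 2 * N * x ^ 2 * y ^ 4 = c / D ^ 2 * N * x * y ^ 2 * (x * y ^ 2) := by ring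
    _ ≤ c / D ^ 2 * N * x * y ^ 2 * (1 * D ^ 2) := by gcongr
    _ = c * N * x * y ^ 2 := by field_simp

/-- Lemma 1 of the paper: exponential deviation bound for the maximum likelihood
estimator over a moving time window in the sequential pairwise-comparison model.
There exist constants `c1, c2 > 0` depending only on `K, W, κ0, κI, δb` such that
for every data-generating process with selection probabilities bounded below by
`εl`, `P_θ(sup_{n≤t≤m} ‖θ̂^{(t)} − θ‖ ≥ ε1) ≤ c2 m^K exp(−c1 n εl² ε1⁴)`. -/
theorem mle_moving_window_deviation_bound
    (K : ℕ) (hK : 2 ≤ K)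
    (W : Set (EuclideanSpace ℝ (Fin (K - 1)))) (hWcomp : IsCompact W)
    (δb : ℝ) (hδb : 0 < δb)
    (hcorner : ∀ θ ∈ W, ∀ s : ℝ, 0 < s →
      ENNReal.ofReal (min (δb * s ^ (K - 1)) 1) ≤ volume (Metric.ball θ s ∩ W))
    (κ0 κI : ℝ) (hκ0 : 0 < κ0) (hκI : 0 < κI) :
    ∃ c1 > (0 : ℝ), ∃ c2 > (0 : ℝ),
      ∀ (pa : {p : Fin K × Fin K // p.1 < p.2} → EuclideanSpace ℝ (Fin (K - 1)) → ℝ),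
        -- the comparison probabilities lie in (0,1) on W
        (∀ a, ∀ θ ∈ W, 0 < pa a θ ∧ pa a θ < 1) →
        -- log p_a and log(1 − p_a) are κ0-Lipschitz on W
        (∀ a, ∀ θ ∈ W, ∀ θ' ∈ W,
          |Real.log (pa a θ) - Real.log (pa a θ')| ≤ κ0 * ‖θ - θ'‖) →
        (∀ a, ∀ θ ∈ W, ∀ θ' ∈ W,
          |Real.log (1 - pa a θ) - Real.log (1 - pa a θ')| ≤ κ0 * ‖θ - θ'‖) →
        -- quantitative identifiability: max_a D^a(θ‖θ') ≥ κI ‖θ − θ'‖²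
        (∀ θ ∈ W, ∀ θ' ∈ W, ∃ a,
          κI * ‖θ - θ'‖ ^ 2 ≤
            pa a θ * Real.log (pa a θ / pa a θ')
              + (1 - pa a θ) * Real.log ((1 - pa a θ) / (1 - pa a θ'))) →
        ∀ θ, θ ∈ W →
        ∀ ε1 : ℝ, 0 < ε1 → ∀ εl : ℝ, 0 < εl → εl ≤ 1 →
        ∀ n m : ℕ, 1 ≤ n → n ≤ m →
        ∀ (Ω : Type) (mΩ : MeasurableSpace Ω) (P : Measure Ω),
          IsProbabilityMeasure P →
        ∀ (ℱ : Filtration ℕ mΩ)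
          (act : ℕ → Ω → {p : Fin K × Fin K // p.1 < p.2})
          (X : ℕ → Ω → ℝ)
          (lam : ℕ → {p : Fin K × Fin K // p.1 < p.2} → Ω → ℝ)
          (θhat : ℕ → Ω → EuclideanSpace ℝ (Fin (K - 1))),
          -- the selected pairs and outcomes are adapted, with X_t ∈ {0, 1}
          (∀ t, 1 ≤ t → Measurable[ℱ t] (act t)) →
          (∀ t, 1 ≤ t → Measurable[ℱ t] (X t)) →
          (∀ t, 1 ≤ t → ∀ ω, X t ω = 0 ∨ X t ω = 1) →
          -- λ_t is an ℱ_{t−1}-measurable probability vector over pairs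
          (∀ t, 1 ≤ t → ∀ b, Measurable[ℱ (t - 1)] (lam t b)) →
          (∀ t, 1 ≤ t → ∀ ω, (∀ b, 0 ≤ lam t b ω) ∧ ∑ b, lam t b ω = 1) →
          -- P(a_t = b | ℱ_{t−1}) = λ_t^b
          (∀ t, 1 ≤ t → ∀ b,
            (P[Set.indicator {ω | act t ω = b} (fun _ => (1 : ℝ)) | ℱ (t - 1)])
              =ᵐ[P] lam t b) →
          -- P(X_t = 1 | ℱ_{t−1} ∨ σ(a_t)) = p_{a_t}(θ)
          (∀ t, 1 ≤ t →
            (P[Set.indicator {ω | X t ω = 1} (fun _ => (1 : ℝ))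
                | ℱ (t - 1) ⊔ MeasurableSpace.comap (act t) ⊤])
              =ᵐ[P] fun ω => pa (act t ω) θ) →
          -- θ̂^{(t)} is an ℱ_t-measurable maximizer over W of the log-likelihood
          (∀ t, ∀ ω, θhat t ω ∈ W) →
          (∀ t, Measurable[ℱ t] (θhat t)) →
          (∀ t, ∀ ω, ∀ θ' ∈ W,
            (∑ s ∈ Finset.Icc 1 t,
              (X s ω * Real.log (pa (act s ω) θ')
                + (1 - X s ω) * Real.log (1 - pa (act s ω) θ')))
            ≤ ∑ s ∈ Finset.Icc 1 t,
                (X s ω * Real.log (pa (act s ω) (θhat t ω))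
                  + (1 - X s ω) * Real.log (1 - pa (act s ω) (θhat t ω)))) →
          -- the selection probabilities are bounded below by εl up to time m, a.s.
          (∀ᵐ ω ∂P, ∀ t, 1 ≤ t → t ≤ m → ∀ b, εl ≤ lam t b ω) →
          P {ω | ∃ t, n ≤ t ∧ t ≤ m ∧ ε1 ≤ ‖θhat t ω - θ‖}
            ≤ ENNReal.ofReal
                (c2 * (m : ℝ) ^ K * Real.exp (-(c1 * n * εl ^ 2 * ε1 ^ 4))) := by
  obtain ⟨D, hD0, hD⟩ := exists_pos_forall_norm_sub_le hWcomp.isBounded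
  obtain ⟨c1, hc1, c2, hc2, hbound⟩ := mle_moving_window_deviation_bound_general
    (ι := {p : Fin K × Fin K // p.1 < p.2}) hWcomp.isBounded hκ0.le hκI
  refine ⟨c1 / D ^ 2, by positivity, c2, hc2, fun pa hmem hlog hlog' hident θ hθ ε1 hε1 εl hεl
    hεl1 n m hn hnm Ω mΩ P _ ℱ act X lam θhat hact hX hX01 _ _ hlam hpX hθhat _ hmax hlow => ?_⟩
  rcases Set.eq_empty_or_nonempty {ω | ∃ t, n ≤ t ∧ t ≤ m ∧ ε1 ≤ ‖θhat t ω - θ‖} with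
    hempty | ⟨ω₀, t₀, -, -, hω₀⟩
  · simp only [hempty, measure_empty, zero_le]
  have hmodel : IsSequentialComparison P ℱ act X (pa · θ) :=
    ⟨fun t => hact (t + 1) t.succ_pos, fun t => hX (t + 1) t.succ_pos,
      fun t => hX01 (t + 1) t.succ_pos, fun t => hpX (t + 1) t.succ_pos⟩
  have hsel (t : ℕ) (ht : t < m) (b) :
      (fun _ => εl) ≤ᵐ[P] P[{ω | act (t + 1) ω = b}.indicator fun _ => (1 : ℝ) | ℱ t] := by
    filter_upwards [hlam (t + 1) t.succ_pos b, hlow] with ω hω hlow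
    exact (hlow (t + 1) t.succ_pos ht b).trans_eq hω.symm
  have hsharp := hbound pa ⟨hmem, hlog, hlog'⟩ hident θ hθ ε1 hε1.le εl hεl.le n m hn hnm hmodel
    hsel hθhat hmax
  rw [finrank_euclideanSpace_fin, Nat.sub_add_cancel (by omega)] at hsharp
  have hε1D : ε1 ≤ D := hω₀.trans (hD _ (hθhat t₀ ω₀) θ hθ)
  rw [← ofReal_measureReal]
  refine ENNReal.ofReal_le_ofReal (hsharp.trans ?_)
  gcongr c2 * _ * Real.exp (-?_)
  exact div_sq_mul_sq_mul_pow_four_le hc1.le n.cast_nonneg hεl.le hεl1 hε1.le hε1D hD0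
end

section
/- Let W ⊂ ℝ^d be a bounded Lebesgue-measurable set, let ρ : W → [0, ∞) be measurable with δ_ρ ≤ ρ(θ) ≤ ρ_max for all θ ∈ W (where δ_ρ > 0), and let ℓ : W → ℝ be κ-Lipschitz (|ℓ(θ) − ℓ(θ′)| ≤ κ‖θ − θ′‖ for all θ, θ′ ∈ W). Let V ⊆ W and W′ ⊆ W be measurable sets with m(V) > 0, let θ* ∈ W′, and let s > 0 satisfy m(W′ ∩ B(θ*, s)) ≥ δ_b s^d for a constant δ_b > 0. Then ∫_V e^{ℓ(θ)} ρ(θ) dθ / ∫_{W′} e^{ℓ(θ)} ρ(θ) dθ ≤ [ ρ_max · m(V) / (δ_ρ · δ_b · s^d) ] · exp( sup_{θ∈V} ℓ(θ) − ℓ(θ*) + κ s ), where m denotes Lebesgue measure and B(θ*, s) the open Euclidean ball of radius s. -/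
open MeasureTheory

/-!
On `V` the integrand `exp ℓ * ρ` is at most `exp (sup_V ℓ) * ρmax`. On `W' ∩ B(θ*, s)` the Lipschitz
condition at the centre gives `ℓ ≥ ℓ(θ*) - κ s`, so there the integrand is at least
`exp (ℓ(θ*) - κ s) * δρ`, and discarding the rest of `W'` only decreases the denominator.
-/

open scoped ENNReal NNReal

section WeightedExponential

variable {α : Type*} [MeasurableSpace α] {μ : Measure α} {ℓ ρ : α → ℝ} {s t : Set α}

theorem integrableOn_exp_mul (hs : MeasurableSet s)
    (hℓmeas : AEStronglyMeasurable ℓ (μ.restrict s)) (hℓ : BddAbove (ℓ '' s))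
    (hρ : IntegrableOn ρ s μ) :
    IntegrableOn (fun θ => Real.exp (ℓ θ) * ρ θ) s μ := by
  obtain ⟨M, hM⟩ := hℓ
  refine hρ.bdd_mul (c := Real.exp M) (Real.continuous_exp.comp_aestronglyMeasurable hℓmeas) ?_
  filter_upwards [ae_restrict_mem hs] with θ hθ
  rw [Real.norm_eq_abs, Real.abs_exp]
  exact Real.exp_le_exp.2 (hM (Set.mem_image_of_mem ℓ hθ))

theorem setIntegral_exp_mul_le {C : ℝ} (hμs : μ s ≠ ∞) (hℓ : BddAbove (ℓ '' s))
    (hρ_nonneg : ∀ θ ∈ s, 0 ≤ ρ θ) (hρ_le : ∀ θ ∈ s, ρ θ ≤ C) :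
    ∫ θ in s, Real.exp (ℓ θ) * ρ θ ∂μ ≤ Real.exp (⨆ θ : s, ℓ θ) * C * μ.real s := by
  refine (Real.le_norm_self _).trans
    (norm_setIntegral_le_of_norm_le_const hμs.lt_top fun θ hθ => ?_)
  rw [Real.norm_of_nonneg (mul_nonneg (Real.exp_nonneg _) (hρ_nonneg θ hθ))]
  gcongr
  · exact hρ_nonneg θ hθ
  · exact le_ciSup_set hℓ hθ
  · exact hρ_le θ hθ

theorem le_setIntegral_exp_mul {a c : ℝ} (hs : MeasurableSet s) (ht : MeasurableSet t)
    (hts : t ⊆ s) (hμt : μ t ≠ ∞) (hc : 0 ≤ c) (hℓ : ∀ θ ∈ t, a ≤ ℓ θ) (hρ : ∀ θ ∈ s, c ≤ ρ θ)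
    (hint : IntegrableOn (fun θ => Real.exp (ℓ θ) * ρ θ) s μ) :
    Real.exp a * c * μ.real t ≤ ∫ θ in s, Real.exp (ℓ θ) * ρ θ ∂μ := by
  have hnonneg : 0 ≤ᵐ[μ.restrict s] fun θ => Real.exp (ℓ θ) * ρ θ := by
    filter_upwards [ae_restrict_mem hs] with θ hθ
    exact mul_nonneg (Real.exp_nonneg _) (hc.trans (hρ θ hθ))
  calc Real.exp a * c * μ.real t
      ≤ ∫ θ in t, Real.exp (ℓ θ) * ρ θ ∂μ := by
        refine setIntegral_ge_of_const_le_real ht hμt (fun θ hθ => ?_) (hint.mono_set hts)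
        gcongr
        · exact hℓ θ hθ
        · exact hρ θ (hts hθ)
    _ ≤ ∫ θ in s, Real.exp (ℓ θ) * ρ θ ∂μ := setIntegral_mono_set hint hnonneg hts.eventuallyLE

end WeightedExponential

section Lipschitz

variable {α : Type*} [PseudoMetricSpace α] {f : α → ℝ} {K : ℝ≥0} {s : Set α}

theorem bddAbove_image_of_lipschitzOnWith (hf : LipschitzOnWith K f s)
    (hs : Bornology.IsBounded s) : BddAbove (f '' s) := by
  obtain ⟨g, hg, hfg⟩ := hf.extend_real
  rw [hfg.image_eq]
  exact (hg.isBounded_image hs).bddAbove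

theorem sub_mul_le_of_lipschitzOnWith_of_mem_ball (hf : LipschitzOnWith K f s) {x y : α} {r : ℝ}
    (hx : x ∈ s) (hy : y ∈ s) (hxy : y ∈ Metric.ball x r) : f x - K * r ≤ f y := by
  rw [sub_le_iff_le_add]
  calc f x ≤ f y + K * dist x y := hf.le_add_mul hx hy
    _ ≤ f y + K * r := by
      gcongr
      exact (Metric.mem_ball'.1 hxy).le

end Lipschitz

theorem posterior_ratio_bound_general {α : Type*} [PseudoMetricSpace α] [MeasurableSpace α]
    [OpensMeasurableSpace α] {μ : Measure α} {W V W' : Set α} (hμW : μ W ≠ ∞)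
    {ρ : α → ℝ} (hρmeas : AEMeasurable ρ (μ.restrict W))
    {δρ ρmax : ℝ} (hδρ : 0 < δρ) (hρ : ∀ θ ∈ W, δρ ≤ ρ θ ∧ ρ θ ≤ ρmax)
    {ℓ : α → ℝ} (hℓ : BddAbove (ℓ '' W)) {κ : ℝ≥0} (hLip : LipschitzOnWith κ ℓ W)
    (hVW : V ⊆ W) (hW'W : W' ⊆ W) (hW'meas : MeasurableSet W')
    {θs : α} (hθs : θs ∈ W) {s b : ℝ} (hb : 0 < b)
    (hball : ENNReal.ofReal b ≤ μ (W' ∩ Metric.ball θs s)) :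
    (∫ θ in V, Real.exp (ℓ θ) * ρ θ ∂μ) / (∫ θ in W', Real.exp (ℓ θ) * ρ θ ∂μ)
      ≤ (ρmax * μ.real V / (δρ * b)) * Real.exp ((⨆ θ : V, ℓ θ) - ℓ θs + κ * s) := by
  have hρ_nonneg : ∀ θ ∈ W, 0 ≤ ρ θ := fun θ hθ => hδρ.le.trans (hρ θ hθ).1
  have hρmax : 0 ≤ ρmax := (hρ_nonneg θs hθs).trans (hρ θs hθs).2
  have hμ_ne_top : ∀ {A : Set α}, A ⊆ W → μ A ≠ ∞ := fun hA => measure_ne_top_of_subset hA hμW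
  have hballW : W' ∩ Metric.ball θs s ⊆ W := Set.inter_subset_left.trans hW'W
  have hρint : IntegrableOn ρ W' μ := by
    have : Fact (μ W' < ∞) := ⟨(hμ_ne_top hW'W).lt_top⟩
    exact .of_mem_Icc δρ ρmax (hρmeas.mono_set hW'W)
      ((ae_restrict_mem hW'meas).mono fun θ hθ => hρ θ (hW'W hθ))
  have hint : IntegrableOn (fun θ => Real.exp (ℓ θ) * ρ θ) W' μ :=
    integrableOn_exp_mul hW'meas ((hLip.mono hW'W).continuousOn.aestronglyMeasurable hW'meas)
      (hℓ.mono (Set.image_mono hW'W)) hρint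
  have hnumerator : ∫ θ in V, Real.exp (ℓ θ) * ρ θ ∂μ
      ≤ Real.exp (⨆ θ : V, ℓ θ) * ρmax * μ.real V :=
    setIntegral_exp_mul_le (hμ_ne_top hVW) (hℓ.mono (Set.image_mono hVW))
      (fun θ hθ => hρ_nonneg θ (hVW hθ)) fun θ hθ => (hρ θ (hVW hθ)).2
  have hdenominator : Real.exp (ℓ θs - κ * s) * δρ * b
      ≤ ∫ θ in W', Real.exp (ℓ θ) * ρ θ ∂μ := by
    grw [(ENNReal.ofReal_le_iff_le_toReal (hμ_ne_top hballW)).1 hball]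
    exact le_setIntegral_exp_mul hW'meas (hW'meas.inter measurableSet_ball)
      Set.inter_subset_left (hμ_ne_top hballW) hδρ.le
      (fun θ hθ => sub_mul_le_of_lipschitzOnWith_of_mem_ball hLip hθs (hballW hθ) hθ.2)
      (fun θ hθ => (hρ θ (hW'W hθ)).1) hint
  calc (∫ θ in V, Real.exp (ℓ θ) * ρ θ ∂μ) / (∫ θ in W', Real.exp (ℓ θ) * ρ θ ∂μ)
      ≤ (Real.exp (⨆ θ : V, ℓ θ) * ρmax * μ.real V) / (Real.exp (ℓ θs - κ * s) * δρ * b) := by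
        gcongr
    _ = (ρmax * μ.real V / (δρ * b)) * Real.exp ((⨆ θ : V, ℓ θ) - ℓ θs + κ * s) := by
        rw [sub_add, Real.exp_sub _ (ℓ θs - κ * s)]
        field_simp

/-- Deterministic bound on ratios of weighted exponential integrals (eqs. ub-stat,
lb-prob, score-bound in the proof of Lemma 3 of the paper):
`∫_V e^{ℓ} ρ / ∫_{W'} e^{ℓ} ρ ≤ [ρmax m(V)/(δρ δb s^d)] exp(sup_V ℓ − ℓ(θ*) + κ s)`. -/
theorem posterior_ratio_bound
    (d : ℕ) (W : Set (EuclideanSpace ℝ (Fin d)))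
    (hWbdd : Bornology.IsBounded W) (hWmeas : MeasurableSet W)
    (ρ : EuclideanSpace ℝ (Fin d) → ℝ) (hρmeas : Measurable ρ)
    (δρ ρmax : ℝ) (hδρ : 0 < δρ)
    (hρ : ∀ θ ∈ W, δρ ≤ ρ θ ∧ ρ θ ≤ ρmax)
    (ℓ : EuclideanSpace ℝ (Fin d) → ℝ) (κ : ℝ) (hκ : 0 < κ)
    (hLip : ∀ θ ∈ W, ∀ θ' ∈ W, |ℓ θ - ℓ θ'| ≤ κ * ‖θ - θ'‖)
    (V W' : Set (EuclideanSpace ℝ (Fin d)))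
    (hVW : V ⊆ W) (hW'W : W' ⊆ W)
    (hVmeas : MeasurableSet V) (hW'meas : MeasurableSet W')
    (hVpos : 0 < volume V)
    (θs : EuclideanSpace ℝ (Fin d)) (hθs : θs ∈ W')
    (s δb : ℝ) (hs : 0 < s) (hδb : 0 < δb)
    (hball : ENNReal.ofReal (δb * s ^ d) ≤ volume (W' ∩ Metric.ball θs s)) :
    (∫ θ in V, Real.exp (ℓ θ) * ρ θ) / (∫ θ in W', Real.exp (ℓ θ) * ρ θ)
      ≤ (ρmax * (volume V).toReal / (δρ * δb * s ^ d))
          * Real.exp ((⨆ θ : V, ℓ θ) - ℓ θs + κ * s) := by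
  lift κ to ℝ≥0 using hκ.le
  have hLipOn : LipschitzOnWith κ ℓ W :=
    .of_dist_le_mul (by simpa only [dist_eq_norm, Real.norm_eq_abs] using hLip)
  rw [mul_assoc δρ]
  exact posterior_ratio_bound_general hWbdd.measure_lt_top.ne hρmeas.aemeasurable hδρ hρ
    (bddAbove_image_of_lipschitzOnWith hLipOn hWbdd) hLipOn hVW hW'W hW'meas (hW'W hθs)
    (by positivity) hball
end
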